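/- arXiv:2312.00711 — 8 statements merged into one kernel-verified Lean document; each statement's English description precedes it below -/
import Mathlib

section
/- Let 0 < a < b be real numbers, let u : [a,b] → ℝ be Lebesgue integrable, let f : [a,b] → ℝ be differentiable, and let c ∈ ℝ. If t·f'(t) + c·f(t) ≤ u(t) for every t ∈ (a,b), then for all x, y ∈ [a,b] with x < y one has y^c f(y) − x^c f(x) ≤ ∫_x^y t^{c−1} u(t) dt. The same conclusion holds with both inequalities reversed. -/
open Set MeasureTheory

/-- Grönwall-type lemma with power-law weight: integrating the differential
inequality `t f'(t) + c f(t) ≤ u(t)` on `[a,b] ⊆ (0,∞)`, together with the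
reversed-inequalities version.  Here `t ^ c` denotes the real power. -/
theorem gronwall_power_weight (a b c : ℝ) (ha : 0 < a) (hab : a < b) (u f : ℝ → ℝ)
    (hu : IntegrableOn u (Set.Icc a b))
    (hf : DifferentiableOn ℝ f (Set.Icc a b)) :
    ((∀ t ∈ Set.Ioo a b, t * deriv f t + c * f t ≤ u t) →
      ∀ x ∈ Set.Icc a b, ∀ y ∈ Set.Icc a b, x < y →
        y ^ c * f y - x ^ c * f x ≤ ∫ t in x..y, t ^ (c - 1) * u t) ∧
    ((∀ t ∈ Set.Ioo a b, u t ≤ t * deriv f t + c * f t) →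
      ∀ x ∈ Set.Icc a b, ∀ y ∈ Set.Icc a b, x < y →
        (∫ t in x..y, t ^ (c - 1) * u t) ≤ y ^ c * f y - x ^ c * f x) := by
  have hc : ∀ r : ℝ, ContinuousOn (fun t : ℝ => t ^ r) (Set.Icc a b) := fun r t ht =>
    (Real.continuousAt_rpow_const t r (Or.inl (ha.trans_le ht.1).ne')).continuousWithinAt
  have hcont : ContinuousOn (fun t : ℝ => t ^ c * f t) (Set.Icc a b) :=
    (hc c).mul hf.continuousOn
  have hint : IntegrableOn (fun t : ℝ => t ^ (c - 1) * u t) (Set.Icc a b) :=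
    hu.continuousOn_mul (hc (c - 1)) isCompact_Icc
  have hder : ∀ t ∈ Set.Ioo a b, HasDerivAt (fun t : ℝ => t ^ c * f t)
      (t ^ (c - 1) * (t * deriv f t + c * f t)) t := by
    intro t ht
    have ht0 : 0 < t := ha.trans ht.1
    have h1 : HasDerivAt f (deriv f t) t :=
      (hf.differentiableAt (Icc_mem_nhds ht.1 ht.2)).hasDerivAt
    have h2 := (Real.hasDerivAt_rpow_const (p := c) (Or.inl ht0.ne')).mul h1
    have h3 : t ^ c = t ^ (c - 1) * t := by
      rw [← Real.rpow_add_one ht0.ne', sub_add_cancel]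
    refine h2.congr_deriv ?_
    rw [h3]
    ring
  have hpos : ∀ t ∈ Set.Ioo a b, 0 ≤ t ^ (c - 1) := fun t ht =>
    Real.rpow_nonneg (ha.trans ht.1).le _
  constructor
  · intro h x hx y hy hxy
    have hsub := Set.Icc_subset_Icc hx.1 hy.2
    have hsub' := Set.Ioo_subset_Ioo hx.1 hy.2
    exact intervalIntegral.sub_le_integral_of_hasDeriv_right_of_le hxy.le (hcont.mono hsub)
      (fun t ht => (hder t (hsub' ht)).hasDerivWithinAt) (hint.mono_set hsub)
      (fun t ht => mul_le_mul_of_nonneg_left (h t (hsub' ht)) (hpos t (hsub' ht)))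
  · intro h x hx y hy hxy
    have hsub := Set.Icc_subset_Icc hx.1 hy.2
    have hsub' := Set.Ioo_subset_Ioo hx.1 hy.2
    exact intervalIntegral.integral_le_sub_of_hasDeriv_right_of_le hxy.le (hcont.mono hsub)
      (fun t ht => (hder t (hsub' ht)).hasDerivWithinAt) (hint.mono_set hsub)
      (fun t ht => mul_le_mul_of_nonneg_left (h t (hsub' ht)) (hpos t (hsub' ht)))
end

section
/- Let ε : [0,∞) → [0,∞) be a continuous nonnegative function with η := sup_{x ≥ 0} ε(x) < 1. Let f : [0,∞) → ℝ be twice differentiable with f''(x) + 2 f'(x) + ε(x) f(x) = 0 for all x ≥ 0, f(0) = 0 and f'(0) < 0. Then for every x ≥ 0 one has f(x) ≤ (f'(0) / (2 √(1−η))) · ( e^{−(1−√(1−η)) x} − e^{−(1+√(1−η)) x} ); in particular f(x) < 0 for every x > 0. -/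
open Set Filter

/-- Bound on an interval `[0,T]` on which the solution is nonpositive. -/
lemma ode_bound_aux (ε f g : ℝ → ℝ) (s T : ℝ) (hs : 0 < s) (hT : 0 ≤ T)
    (hε : ∀ x ∈ Set.Ici (0 : ℝ), ε x ≤ 1 - s ^ 2)
    (hf : ∀ x ∈ Set.Ici (0 : ℝ), HasDerivWithinAt f (g x) (Set.Ici 0) x)
    (hg : ∀ x ∈ Set.Ici (0 : ℝ),
      HasDerivWithinAt g (-(2 * g x) - ε x * f x) (Set.Ici 0) x)
    (hf0 : f 0 = 0) (hneg : ∀ x ∈ Set.Ico 0 T, f x ≤ 0) :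
    f T ≤ g 0 / (2 * s) * (Real.exp (-(1 - s) * T) - Real.exp (-(1 + s) * T)) := by
  have hsub : Set.Icc 0 T ⊆ Set.Ici (0 : ℝ) := fun x hx => hx.1
  have hexp : ∀ c x : ℝ, HasDerivAt (fun x => Real.exp (c * x)) (Real.exp (c * x) * c) x := by
    intro c x
    simpa using ((hasDerivAt_id x).const_mul c).exp
  have hu : ∀ x ∈ Set.Ici (0 : ℝ), HasDerivWithinAt
      (fun x => Real.exp ((1 + s) * x) * (g x + (1 - s) * f x))
      (Real.exp ((1 + s) * x) * ((1 - s ^ 2 - ε x) * f x)) (Set.Ici 0) x := by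
    intro x hx
    have := ((hexp (1 + s) x).hasDerivWithinAt (s := Set.Ici 0)).mul
      ((hg x hx).add ((hf x hx).const_mul (1 - s)))
    refine this.congr_deriv ?_
    simp only [Pi.add_apply]
    ring
  have hu_anti : AntitoneOn (fun x => Real.exp ((1 + s) * x) * (g x + (1 - s) * f x))
      (Set.Icc 0 T) := by
    refine antitoneOn_of_hasDerivWithinAt_nonpos (convex_Icc 0 T)
      (fun x hx => ((hu x (hsub hx)).mono hsub).continuousWithinAt)
      (fun x hx => (hu x (hsub (interior_subset hx))).mono (interior_subset.trans hsub)) ?_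
    intro x hx
    rw [interior_Icc] at hx
    have h1 := hneg x ⟨hx.1.le, hx.2⟩
    have h2 := hε x hx.1.le
    exact mul_nonpos_of_nonneg_of_nonpos (Real.exp_pos _).le
      (mul_nonpos_of_nonneg_of_nonpos (by linarith) h1)
  have hub : ∀ x ∈ Set.Icc 0 T, Real.exp ((1 + s) * x) * (g x + (1 - s) * f x) ≤ g 0 := by
    intro x hx
    have := hu_anti ⟨le_refl 0, hT⟩ hx hx.1
    simpa [hf0] using this
  have hw : ∀ x ∈ Set.Ici (0 : ℝ), HasDerivWithinAt
      (fun x => Real.exp ((1 - s) * x) * f x + g 0 / (2 * s) * Real.exp ((-(2 * s)) * x))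
      (Real.exp ((-(2 * s)) * x) *
        (Real.exp ((1 + s) * x) * (g x + (1 - s) * f x) - g 0)) (Set.Ici 0) x := by
    intro x hx
    have := (((hexp (1 - s) x).hasDerivWithinAt (s := Set.Ici 0)).mul (hf x hx)).add
      (((hexp (-(2 * s)) x).hasDerivWithinAt (s := Set.Ici 0)).const_mul (g 0 / (2 * s)))
    refine this.congr_deriv ?_
    have e : Real.exp ((1 - s) * x) = Real.exp ((-(2 * s)) * x) * Real.exp ((1 + s) * x) := by
      rw [← Real.exp_add]; congr 1; ring
    rw [e]
    field_simp
    ring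
  have hw_anti : AntitoneOn
      (fun x => Real.exp ((1 - s) * x) * f x + g 0 / (2 * s) * Real.exp ((-(2 * s)) * x))
      (Set.Icc 0 T) := by
    refine antitoneOn_of_hasDerivWithinAt_nonpos (convex_Icc 0 T)
      (fun x hx => ((hw x (hsub hx)).mono hsub).continuousWithinAt)
      (fun x hx => (hw x (hsub (interior_subset hx))).mono (interior_subset.trans hsub)) ?_
    intro x hx
    have := hub x (interior_subset hx)
    exact mul_nonpos_of_nonneg_of_nonpos (Real.exp_pos _).le (by linarith)
  have hfin := hw_anti ⟨le_refl 0, hT⟩ ⟨hT, le_refl T⟩ hT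
  simp only [hf0, mul_zero, Real.exp_zero, mul_one, zero_add] at hfin
  have e1 : Real.exp (-(1 - s) * T) * Real.exp ((1 - s) * T) = 1 := by
    rw [← Real.exp_add, ← Real.exp_zero]; congr 1; ring
  have e2 : Real.exp (-(1 + s) * T) = Real.exp (-(1 - s) * T) * Real.exp ((-(2 * s)) * T) := by
    rw [← Real.exp_add]; congr 1; ring
  have h3 := mul_le_mul_of_nonneg_left hfin (Real.exp_pos (-(1 - s) * T)).le
  rw [e2]
  calc f T = Real.exp (-(1 - s) * T) * Real.exp ((1 - s) * T) * f T := by rw [e1, one_mul]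
    _ ≤ _ := by linarith

/-- Solutions of `f'' + 2 f' + ε f = 0` on `[0,∞)` with `f(0) = 0`, `f'(0) < 0`,
where `ε ≥ 0` is continuous with supremum `η < 1`, satisfy the explicit upper
bound, and in particular are negative on `(0,∞)`.  Derivatives on `[0,∞)` are
formalised as derivatives within `Set.Ici 0`. -/
theorem ode_negative_solution_bound (ε f : ℝ → ℝ) (η : ℝ)
    (hεcont : ContinuousOn ε (Set.Ici 0))
    (hεnonneg : ∀ x ∈ Set.Ici (0 : ℝ), 0 ≤ ε x)
    (hη : IsLUB (ε '' Set.Ici 0) η)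
    (hη1 : η < 1)
    (hf1 : DifferentiableOn ℝ f (Set.Ici 0))
    (hf2 : DifferentiableOn ℝ (derivWithin f (Set.Ici 0)) (Set.Ici 0))
    (hODE : ∀ x ∈ Set.Ici (0 : ℝ),
      derivWithin (derivWithin f (Set.Ici 0)) (Set.Ici 0) x
        + 2 * derivWithin f (Set.Ici 0) x + ε x * f x = 0)
    (hf0 : f 0 = 0)
    (hf0' : derivWithin f (Set.Ici 0) 0 < 0) :
    (∀ x ∈ Set.Ici (0 : ℝ),
      f x ≤ derivWithin f (Set.Ici 0) 0 / (2 * Real.sqrt (1 - η)) *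
        (Real.exp (-(1 - Real.sqrt (1 - η)) * x)
          - Real.exp (-(1 + Real.sqrt (1 - η)) * x))) ∧
    (∀ x : ℝ, 0 < x → f x < 0) := by
  set g := derivWithin f (Set.Ici 0) with hgdef
  set s := Real.sqrt (1 - η) with hsdef
  have hs : 0 < s := Real.sqrt_pos.mpr (by linarith)
  have hs2 : s ^ 2 = 1 - η := Real.sq_sqrt (by linarith)
  have hε : ∀ x ∈ Set.Ici (0 : ℝ), ε x ≤ 1 - s ^ 2 := by
    intro x hx
    have := hη.1 (Set.mem_image_of_mem ε hx)
    linarith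
  have hf : ∀ x ∈ Set.Ici (0 : ℝ), HasDerivWithinAt f (g x) (Set.Ici 0) x :=
    fun x hx => (hf1 x hx).hasDerivWithinAt
  have hg : ∀ x ∈ Set.Ici (0 : ℝ),
      HasDerivWithinAt g (-(2 * g x) - ε x * f x) (Set.Ici 0) x := by
    intro x hx
    refine (hf2 x hx).hasDerivWithinAt.congr_deriv ?_
    have := hODE x hx
    linarith
  have hbneg : ∀ x : ℝ, 0 < x →
      g 0 / (2 * s) * (Real.exp (-(1 - s) * x) - Real.exp (-(1 + s) * x)) < 0 := by
    intro x hx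
    refine mul_neg_of_neg_of_pos (div_neg_of_neg_of_pos hf0' (by linarith)) ?_
    rw [sub_pos, Real.exp_lt_exp]
    nlinarith [mul_pos hs hx]
  have hlt : ∀ x : ℝ, 0 < x → f x < 0 := by
    intro a ha
    by_contra! hfa
    have hnear : ∀ᶠ x in nhdsWithin (0 : ℝ) (Set.Ioi 0), f x < 0 := by
      have h1 := (hf 0 Set.self_mem_Ici)
      rw [hasDerivWithinAt_iff_tendsto_slope, Set.Ici_sdiff_left] at h1
      filter_upwards [h1.eventually (gt_mem_nhds hf0'), self_mem_nhdsWithin] with x hx hx0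
      have hx0 : 0 < x := hx0
      rw [slope_def_field, hf0, sub_zero, sub_zero] at hx
      by_contra! h
      exact absurd hx (not_lt.mpr (div_nonneg h hx0.le))
    obtain ⟨δ, hδ, hδneg⟩ := mem_nhdsGT_iff_exists_Ioo_subset.mp hnear
    have hδ : 0 < δ := hδ
    have hδa : δ ≤ a := by
      by_contra! h
      have : f a < 0 := hδneg ⟨ha, h⟩
      linarith
    have hcont : ContinuousOn f (Set.Icc δ a) :=
      hf1.continuousOn.mono (fun x hx => hδ.le.trans hx.1)
    have hcl : IsClosed (Set.Icc δ a ∩ Set.preimage f (Set.Ici 0)) :=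
      hcont.preimage_isClosed_of_isClosed isClosed_Icc isClosed_Ici
    have hcpt : IsCompact (Set.Icc δ a ∩ Set.preimage f (Set.Ici 0)) :=
      isCompact_Icc.of_isClosed_subset hcl Set.inter_subset_left
    obtain ⟨m, ⟨⟨hm1, hm2⟩, hm3⟩, hmin⟩ := hcpt.exists_isLeast ⟨a, ⟨hδa, le_refl a⟩, hfa⟩
    have hm3 : 0 ≤ f m := hm3
    have hm0 : 0 < m := hδ.trans_le hm1
    have := ode_bound_aux ε f g s m hs hm0.le hε hf hg hf0 (by
      intro x hx
      rcases hx.1.eq_or_lt with h | h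
      · rw [← h, hf0]
      · by_contra! hfx
        by_cases hxd : x < δ
        · have : f x < 0 := hδneg ⟨h, hxd⟩
          linarith
        · have := hmin ⟨⟨not_lt.mp hxd, hx.2.le.trans hm2⟩, hfx.le⟩
          linarith [hx.2])
    linarith [hbneg m hm0]
  refine ⟨fun x hx => ode_bound_aux ε f g s x hs hx hε hf hg hf0 ?_, hlt⟩
  intro y hy
  rcases hy.1.eq_or_lt with h | h
  · rw [← h, hf0]
  · exact (hlt y h).le
end

section
/- For every λ ∈ [0,2) there exists a unique twice differentiable function g : [0,∞) → ℝ satisfying g''(x) + 2 g'(x) = g(x)^2 for all x ≥ 0, g(0) = 0 and g'(0) = −λ. Moreover this solution satisfies −λ/2 ≤ g(x) ≤ 0 and |g'(x)| ≤ 2λ for all x ≥ 0, and g(x) → 0 and g'(x) → 0 as x → ∞. -/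
open Set Filter

/-- First derivative on `[0,∞)` (derivative within `Set.Ici 0`). -/
noncomputable def derIci (g : ℝ → ℝ) : ℝ → ℝ := fun x => derivWithin g (Set.Ici 0) x

/-- Second derivative on `[0,∞)`. -/
noncomputable def derIci2 (g : ℝ → ℝ) : ℝ → ℝ := fun x => derivWithin (derIci g) (Set.Ici 0) x

/-- `g : [0,∞) → ℝ` is a twice differentiable solution of `g'' + 2 g' = g²`
with `g(0) = 0` and `g'(0) = -λ`. -/
def IsGSol (lam : ℝ) (g : ℝ → ℝ) : Prop :=
  DifferentiableOn ℝ g (Set.Ici 0) ∧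
  DifferentiableOn ℝ (derIci g) (Set.Ici 0) ∧
  (∀ x ∈ Set.Ici (0 : ℝ), derIci2 g x + 2 * derIci g x = (g x) ^ 2) ∧
  g 0 = 0 ∧ derIci g 0 = -lam


open scoped NNReal

noncomputable def clampP (R : ℝ) (x : ℝ × ℝ) : ℝ × ℝ :=
  (max (-R) (min R x.1), max (-R) (min R x.2))

lemma clampP_lip (R : ℝ) : LipschitzWith 1 (clampP R) := by
  have h1 : LipschitzWith 1 (fun x : ℝ × ℝ => max (-R) (min R x.1)) :=
    (LipschitzWith.prod_fst.const_min R).const_max (-R)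
  have h2 : LipschitzWith 1 (fun x : ℝ × ℝ => max (-R) (min R x.2)) :=
    (LipschitzWith.prod_snd.const_min R).const_max (-R)
  have h3 := h1.prodMk h2
  rw [max_self] at h3
  exact h3

lemma clampP_norm_le (R : ℝ) (hR : 0 ≤ R) (x : ℝ × ℝ) : ‖clampP R x‖ ≤ R := by
  simp only [clampP, Prod.norm_def, Real.norm_eq_abs, sup_le_iff, abs_le]
  grind

lemma clampP_norm_le' (R : ℝ) (hR : 0 ≤ R) (x : ℝ × ℝ) : ‖clampP R x‖ ≤ ‖x‖ := by
  simp only [clampP, Prod.norm_def, Real.norm_eq_abs]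
  apply max_le_max <;> grind

lemma clampP_eq (R : ℝ) (x : ℝ × ℝ) (h : ‖x‖ ≤ R) : clampP R x = x := by
  simp only [Prod.norm_def, Real.norm_eq_abs, sup_le_iff, abs_le] at h
  ext <;> simp only [clampP] <;> grind

lemma exists_on_Icc (K : ℝ≥0) (v : ℝ × ℝ → ℝ × ℝ) (hv : LipschitzWith K v) (x₀ : ℝ × ℝ)
    (T : ℝ) (hT : 0 ≤ T) :
    ∃ α : ℝ → ℝ × ℝ, α 0 = x₀ ∧
      ∀ t ∈ Icc 0 T, HasDerivWithinAt α (v (α t)) (Icc 0 T) t := by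
  have hb : ∀ x, ‖v x‖ ≤ K * ‖x‖ + ‖v 0‖ := by
    intro x
    have h1 := hv.norm_sub_le x 0
    have h2 := norm_le_norm_sub_add (v x) (v 0)
    simp only [sub_zero] at h1
    linarith
  set R : ℝ := gronwallBound ‖x₀‖ K ‖v 0‖ T with hRdef
  have hmono := gronwallBound_mono (norm_nonneg x₀) (norm_nonneg (v 0)) K.2
  have hR : 0 ≤ R := by
    have := hmono hT
    rw [gronwallBound_x0] at this
    exact (norm_nonneg _).trans this
  let w : ℝ × ℝ → ℝ × ℝ := fun x => v (clampP R x)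
  have hw : LipschitzWith K w := by
    have h3 := hv.comp (clampP_lip R)
    rw [mul_one] at h3
    exact h3
  let L : ℝ≥0 := ⟨K * R + ‖v 0‖, by positivity⟩
  let T' : ℝ≥0 := ⟨T, hT⟩
  have hpl : IsPicardLindelof (fun _ : ℝ => w) (tmin := 0) (tmax := T) ⟨0, le_rfl, hT⟩ x₀
      (L * T') 0 L K := by
    apply IsPicardLindelof.of_time_independent
    · intro x _
      refine (hb _).trans ?_
      change _ ≤ (K : ℝ) * R + ‖v 0‖
      gcongr
      exact clampP_norm_le R hR x
    · exact hw.lipschitzOnWith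
    · rw [NNReal.coe_mul]
      change (L : ℝ) * _ ≤ L * T - 0
      simp [hT]
  obtain ⟨α, h0, hα⟩ := hpl.exists_eq_forall_mem_Icc_hasDerivWithinAt₀
  have h0 : α 0 = x₀ := h0
  have hbd : ∀ t ∈ Icc 0 T, ‖α t‖ ≤ gronwallBound ‖x₀‖ K ‖v 0‖ (t - 0) := by
    refine norm_le_gronwallBound_of_norm_deriv_right_le (f' := fun t => w (α t))
      (fun t ht => (hα t ht).continuousWithinAt) ?_ (by rw [h0]) ?_
    · intro t ht
      exact (hα t (Ico_subset_Icc_self ht)).mono_of_mem_nhdsWithin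
        (mem_of_superset (Icc_mem_nhdsGE ht.2) (Icc_subset_Icc_left ht.1))
    · intro t ht
      refine (hb _).trans ?_
      gcongr
      exact clampP_norm_le' R hR _
  refine ⟨α, h0, fun t ht => ?_⟩
  have h1 := hα t ht
  have h2 : clampP R (α t) = α t := by
    apply clampP_eq
    refine (hbd t ht).trans (hmono ?_)
    simpa using ht.2
  simpa only [w, h2] using h1

lemma exists_global (K : ℝ≥0) (v : ℝ × ℝ → ℝ × ℝ) (hv : LipschitzWith K v) (x₀ : ℝ × ℝ) :
    ∃ α : ℝ → ℝ × ℝ, α 0 = x₀ ∧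
      ∀ t ∈ Ici (0 : ℝ), HasDerivWithinAt α (v (α t)) (Ici 0) t := by
  choose β h0 hβ using fun n : ℕ => exists_on_Icc K v hv x₀ n n.cast_nonneg
  have huniq : ∀ m n : ℕ, m ≤ n → EqOn (β m) (β n) (Icc 0 m) := by
    intro m n hmn
    have hmn' : (m : ℝ) ≤ n := by exact_mod_cast hmn
    refine ODE_solution_unique_of_mem_Icc_right (v := fun _ => v) (s := fun _ => univ) (K := K)
      (fun t _ => hv.lipschitzOnWith) (fun t ht => (hβ m t ht).continuousWithinAt) ?_
      (fun _ _ => mem_univ _)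
      (fun t ht => ((hβ n t ⟨ht.1, ht.2.trans hmn'⟩).mono
        (Icc_subset_Icc_right hmn')).continuousWithinAt) ?_
      (fun _ _ => mem_univ _) (by rw [h0, h0])
    · intro t ht
      exact (hβ m t (Ico_subset_Icc_self ht)).mono_of_mem_nhdsWithin
        (mem_of_superset (Icc_mem_nhdsGE ht.2) (Icc_subset_Icc_left ht.1))
    · intro t ht
      have ht' : t < n := ht.2.trans_le hmn'
      exact (hβ n t ⟨ht.1, ht'.le⟩).mono_of_mem_nhdsWithin
        (mem_of_superset (Icc_mem_nhdsGE ht') (Icc_subset_Icc_left ht.1))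
  let α : ℝ → ℝ × ℝ := fun t => β (⌊t⌋₊ + 1) t
  have hαβ : ∀ (n : ℕ) (t : ℝ), 0 ≤ t → t < n → α t = β n t := by
    intro n t h0t htn
    apply huniq
    · have := (Nat.floor_lt h0t).2 htn
      omega
    · refine ⟨h0t, ?_⟩
      push_cast
      exact (Nat.lt_floor_add_one t).le
  refine ⟨α, ?_, ?_⟩
  · rw [hαβ 1 0 le_rfl (by norm_num), h0]
  · intro t ht
    have h0t : 0 ≤ t := ht
    obtain ⟨n, hn⟩ := exists_nat_gt t
    rw [hαβ n t h0t hn]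
    have hnb : Iio (n : ℝ) ∈ nhds t := Iio_mem_nhds hn
    have h1 : HasDerivWithinAt (β n) (v (β n t)) (Ici 0) t := by
      refine (hβ n t ⟨h0t, hn.le⟩).mono_of_mem_nhdsWithin ?_
      filter_upwards [self_mem_nhdsWithin, mem_nhdsWithin_of_mem_nhds hnb] with s hs hs'
      exact ⟨hs, le_of_lt hs'⟩
    refine h1.congr_of_eventuallyEq ?_ (hαβ n t h0t hn)
    filter_upwards [self_mem_nhdsWithin, mem_nhdsWithin_of_mem_nhds hnb] with s hs hs'
    exact hαβ n s hs hs'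

lemma antitoneOn_Ici {f f' : ℝ → ℝ} {a : ℝ}
    (hf : ∀ x ∈ Ici a, HasDerivWithinAt f (f' x) (Ici a) x)
    (h : ∀ x ∈ Ici a, f' x ≤ 0) : AntitoneOn f (Ici a) := by
  have hd : ∀ x ∈ interior (Ici a), HasDerivAt f (f' x) x := by
    intro x hx
    rw [interior_Ici] at hx
    have hx' : a < x := hx
    exact (hf x hx'.le).hasDerivAt (Ici_mem_nhds hx)
  refine antitoneOn_of_deriv_nonpos (convex_Ici a) (fun x hx => (hf x hx).continuousWithinAt)
    (fun x hx => (hd x hx).differentiableAt.differentiableWithinAt) ?_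
  intro x hx
  rw [(hd x hx).deriv]
  exact h x (interior_subset hx)

lemma linear_le {h h' : ℝ → ℝ} {a c : ℝ}
    (hf : ∀ x ∈ Ici a, HasDerivWithinAt h (h' x) (Ici a) x)
    (hc : ∀ x ∈ Ici a, h' x + 2 * h x ≤ c) :
    ∀ x ∈ Ici a, h x ≤ c / 2 + (h a - c / 2) * Real.exp (-(2 * (x - a))) := by
  intro x hx
  have hF : ∀ x ∈ Ici a, HasDerivWithinAt (fun x => Real.exp (2 * (x - a)) * (h x - c / 2))
      (Real.exp (2 * (x - a)) * (h' x + 2 * h x - c)) (Ici a) x := by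
    intro x hx
    have he : HasDerivAt (fun x : ℝ => Real.exp (2 * (x - a))) (Real.exp (2 * (x - a)) * (2 * 1)) x :=
      (((hasDerivAt_id x).sub_const a).const_mul 2).exp
    convert! he.hasDerivWithinAt.mul ((hf x hx).sub_const (c / 2)) using 1
    ring
  have h1 := antitoneOn_Ici hF (fun x hx =>
    mul_nonpos_of_nonneg_of_nonpos (Real.exp_pos _).le (by linarith [hc x hx]))
    self_mem_Ici hx hx
  simp only [sub_self, mul_zero, Real.exp_zero, one_mul] at h1
  have h2 : Real.exp (2 * (x - a)) * Real.exp (-(2 * (x - a))) = 1 := by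
    rw [← Real.exp_add]; simp
  have h3 := mul_le_mul_of_nonneg_right h1 (Real.exp_pos (-(2 * (x - a)))).le
  have h4 : Real.exp (2 * (x - a)) * (h x - c / 2) * Real.exp (-(2 * (x - a))) = h x - c / 2 := by
    rw [mul_right_comm, h2, one_mul]
  linarith

lemma linear_tendsto {h h' : ℝ → ℝ}
    (hf : ∀ x ∈ Ici (0 : ℝ), HasDerivWithinAt h (h' x) (Ici 0) x)
    (ht : Tendsto (fun x => h' x + 2 * h x) atTop (nhds 0)) : Tendsto h atTop (nhds 0) := by
  have key : ∀ (k k' : ℝ → ℝ), (∀ x ∈ Ici (0 : ℝ), HasDerivWithinAt k (k' x) (Ici 0) x) →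
      Tendsto (fun x => k' x + 2 * k x) atTop (nhds 0) → ∀ ε > 0, ∀ᶠ x in atTop, k x < ε := by
    intro k k' hk hkt ε hε
    obtain ⟨a, ha⟩ := eventually_atTop.1 ((hkt.eventually_lt_const hε).and (eventually_ge_atTop 0))
    have ha0 : 0 ≤ a := (ha a le_rfl).2
    have h1 := linear_le (h := k) (h' := k') (a := a) (c := ε)
      (fun x hx => (hk x (ha0.trans hx)).mono (Ici_subset_Ici.2 ha0)) (fun x hx => (ha x hx).1.le)
    have h2 : Tendsto (fun x => ε / 2 + (k a - ε / 2) * Real.exp (-(2 * (x - a)))) atTop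
        (nhds (ε / 2 + (k a - ε / 2) * 0)) := by
      refine ((Real.tendsto_exp_neg_atTop_nhds_zero.comp ?_).const_mul _).const_add _
      exact (tendsto_atTop_add_const_right _ (-a) tendsto_id).const_mul_atTop two_pos
    filter_upwards [h2.eventually_lt_const (by linarith : ε / 2 + (k a - ε / 2) * 0 < ε),
      eventually_ge_atTop a] with x hx hxa
    exact (h1 x hxa).trans_lt hx
  rw [Metric.tendsto_nhds]
  intro ε hε
  have hneg : Tendsto (fun x => -h' x + 2 * -h x) atTop (nhds 0) := by
    have := ht.neg
    rw [neg_zero] at this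
    exact this.congr fun x => by ring
  filter_upwards [key h h' hf ht ε hε,
    key (fun x => -h x) (fun x => -h' x) (fun x hx => (hf x hx).neg) hneg ε hε] with x h1 h2
  rw [Real.dist_eq, sub_zero, abs_lt]
  constructor <;> linarith

/-- The modified nonlinearity -/
noncomputable def psi (s : ℝ) : ℝ := (max (-1) (min 0 s)) ^ 2 - max 0 s

lemma psi_lip (a b : ℝ) : |psi a - psi b| ≤ 3 * |a - b| := by
  have h1 : LipschitzWith 1 (fun s : ℝ => max (-1) (min 0 s)) :=
    (LipschitzWith.id.const_min 0).const_max (-1)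
  have h2 : LipschitzWith 1 (fun s : ℝ => max 0 s) := LipschitzWith.id.const_max 0
  have h1 := h1.dist_le_mul a b
  have h2 := h2.dist_le_mul a b
  have hb : ∀ s : ℝ, |max (-1) (min 0 s)| ≤ 1 := by intro s; grind
  have ha' := hb a
  have hb' := hb b
  simp only [Real.dist_eq, NNReal.coe_one, one_mul] at h1 h2
  unfold psi
  generalize max (-1) (min 0 a) = A at *
  generalize max (-1) (min 0 b) = B at *
  have h3 : |A ^ 2 - B ^ 2| ≤ 2 * |a - b| := by
    rw [sq_sub_sq, abs_mul]
    have : |A + B| ≤ 2 := (abs_add_le _ _).trans (by linarith)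
    gcongr
  calc _ = |(A ^ 2 - B ^ 2) - (max 0 a - max 0 b)| := by ring_nf
    _ ≤ _ := (abs_sub _ _)
    _ ≤ _ := by linarith

lemma psi_add_le (s : ℝ) : psi s + s ≤ 0 := by
  unfold psi
  rcases le_total s 0 with h | h
  · rcases le_total s (-1) with h' | h'
    · rw [min_eq_right h, max_eq_left h', max_eq_left h]; linarith
    · rw [min_eq_right h, max_eq_right h', max_eq_left h]; nlinarith
  · rw [min_eq_left h, max_eq_right h]; norm_num

lemma psi_nonneg (s : ℝ) (hs : s ≤ 0) : 0 ≤ psi s := by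
  unfold psi
  rw [max_eq_left hs]; simpa using sq_nonneg _

lemma psi_eq (s : ℝ) (hs : s ≤ 0) (h1 : -1 ≤ s) : psi s = s ^ 2 := by
  unfold psi
  rw [min_eq_right hs, max_eq_left hs, max_eq_right h1, sub_zero]

/-- First-order system form of the equation. -/
def IsPair (lam : ℝ) (g w : ℝ → ℝ) : Prop :=
  (∀ x ∈ Ici (0 : ℝ), HasDerivWithinAt g (w x) (Ici 0) x) ∧
  (∀ x ∈ Ici (0 : ℝ), HasDerivWithinAt w (g x ^ 2 - 2 * w x) (Ici 0) x) ∧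
  g 0 = 0 ∧ w 0 = -lam

lemma isPair_of_sol {lam : ℝ} {g : ℝ → ℝ} (h : IsGSol lam g) : IsPair lam g (derIci g) := by
  obtain ⟨h1, h2, h3, h4, h5⟩ := h
  refine ⟨fun x hx => (h1 x hx).hasDerivWithinAt, fun x hx => ?_, h4, h5⟩
  have := (h2 x hx).hasDerivWithinAt
  have h6 := h3 x hx
  have h7 : g x ^ 2 - 2 * derIci g x = derivWithin (derIci g) (Ici 0) x := by
    rw [← h6]; simp [derIci2]
  rw [h7]; exact this

lemma IsPair.derIci_eq {lam : ℝ} {g w : ℝ → ℝ} (h : IsPair lam g w) :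
    ∀ x ∈ Ici (0 : ℝ), derIci g x = w x :=
  fun x hx => (h.1 x hx).derivWithin (uniqueDiffOn_Ici 0 x hx)

lemma IsPair.sol {lam : ℝ} {g w : ℝ → ℝ} (h : IsPair lam g w) : IsGSol lam g := by
  have he := h.derIci_eq
  have hd : ∀ x ∈ Ici (0 : ℝ), HasDerivWithinAt (derIci g) (g x ^ 2 - 2 * w x) (Ici 0) x :=
    fun x hx => (h.2.1 x hx).congr he (he x hx)
  refine ⟨fun x hx => (h.1 x hx).differentiableWithinAt,
    fun x hx => (hd x hx).differentiableWithinAt, fun x hx => ?_, h.2.2.1, ?_⟩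
  · have : derIci2 g x = g x ^ 2 - 2 * w x :=
      (hd x hx).derivWithin (uniqueDiffOn_Ici 0 x hx)
    rw [this, he x hx]; ring
  · rw [he 0 self_mem_Ici]; exact h.2.2.2

lemma IsPair.unique {lam : ℝ} {g₁ w₁ g₂ w₂ : ℝ → ℝ} (h₁ : IsPair lam g₁ w₁)
    (h₂ : IsPair lam g₂ w₂) : ∀ x ∈ Ici (0 : ℝ), g₁ x = g₂ x ∧ w₁ x = w₂ x := by
  intro T hT
  have hc : ∀ {g w}, IsPair lam g w → ContinuousOn g (Icc 0 T) := fun h x hx =>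
    ((h.1 x hx.1).continuousWithinAt).mono Icc_subset_Ici_self
  have hcw : ∀ {g w}, IsPair lam g w → ContinuousOn w (Icc 0 T) := fun h x hx =>
    ((h.2.1 x hx.1).continuousWithinAt).mono Icc_subset_Ici_self
  obtain ⟨M₁, hM₁⟩ := isCompact_Icc.exists_bound_of_continuousOn (hc h₁)
  obtain ⟨M₂, hM₂⟩ := isCompact_Icc.exists_bound_of_continuousOn (hc h₂)
  let M : ℝ := max M₁ M₂
  have hM : 0 ≤ M :=
    ((norm_nonneg _).trans (hM₁ 0 ⟨le_rfl, hT⟩)).trans (le_max_left _ _)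
  let K : ℝ≥0 := ⟨2 * M + 2, by positivity⟩
  have hv : LipschitzOnWith K (fun p : ℝ × ℝ => (p.2, p.1 ^ 2 - 2 * p.2))
      {p : ℝ × ℝ | |p.1| ≤ M} := by
    apply LipschitzOnWith.of_dist_le_mul
    rintro ⟨a, b⟩ ha ⟨c, d⟩ hc
    change |a| ≤ M at ha
    change |c| ≤ M at hc
    change _ ≤ (2 * M + 2) * _
    have hac : |a - c| ≤ dist (a, b) (c, d) := le_max_left _ _
    have hbd : |b - d| ≤ dist (a, b) (c, d) := le_max_right _ _
    generalize dist (a, b) (c, d) = D at *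
    have hD : 0 ≤ D := (abs_nonneg _).trans hac
    apply max_le
    · change |b - d| ≤ _
      nlinarith
    · change |(a ^ 2 - 2 * b) - (c ^ 2 - 2 * d)| ≤ _
      have h3 : |a ^ 2 - c ^ 2| ≤ 2 * M * D := by
        rw [sq_sub_sq, abs_mul]
        have : |a + c| ≤ 2 * M := (abs_add_le _ _).trans (by linarith)
        gcongr
      calc |(a ^ 2 - 2 * b) - (c ^ 2 - 2 * d)| = |(a ^ 2 - c ^ 2) - 2 * (b - d)| := by ring_nf
        _ ≤ |a ^ 2 - c ^ 2| + |2 * (b - d)| := abs_sub _ _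
        _ = |a ^ 2 - c ^ 2| + 2 * |b - d| := by rw [abs_mul]; norm_num
        _ ≤ _ := by linarith
  have hder : ∀ {g w}, IsPair lam g w → ∀ t ∈ Ico 0 T,
      HasDerivWithinAt (fun x => (g x, w x)) (w t, g t ^ 2 - 2 * w t) (Ici t) t := fun h t ht =>
    ((h.1 t ht.1).prodMk (h.2.1 t ht.1)).mono (Ici_subset_Ici.2 ht.1)
  have heq := ODE_solution_unique_of_mem_Icc_right
    (v := fun _ => fun p : ℝ × ℝ => (p.2, p.1 ^ 2 - 2 * p.2))
    (s := fun _ => {p : ℝ × ℝ | |p.1| ≤ M}) (K := K) (a := 0) (b := T)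
    (f := fun x => (g₁ x, w₁ x)) (g := fun x => (g₂ x, w₂ x))
    (fun _ _ => hv) ((hc h₁).prodMk (hcw h₁)) (hder h₁)
    (fun t ht => (hM₁ t (Ico_subset_Icc_self ht)).trans (le_max_left _ _))
    ((hc h₂).prodMk (hcw h₂)) (hder h₂)
    (fun t ht => (hM₂ t (Ico_subset_Icc_self ht)).trans (le_max_right _ _))
    (by simp [h₁.2.2.1, h₁.2.2.2, h₂.2.2.1, h₂.2.2.2]) ⟨hT, le_rfl⟩
  exact Prod.mk.inj heq

lemma exp_neg_le_one_of {x : ℝ} (hx : x ∈ Ici (0 : ℝ)) : Real.exp (-(2 * (x - 0))) ≤ 1 := by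
  have hx' : 0 ≤ x := hx
  rw [Real.exp_le_one_iff]; linarith

lemma exists_pair (lam : ℝ) (h0 : 0 ≤ lam) (h2 : lam < 2) :
    ∃ g w : ℝ → ℝ, IsPair lam g w ∧ ∀ x ∈ Ici (0 : ℝ), -lam / 2 ≤ g x ∧ g x ≤ 0 := by
  have hv : LipschitzWith 5 (fun p : ℝ × ℝ => (p.2, psi p.1 - 2 * p.2)) := by
    apply LipschitzWith.of_dist_le_mul
    rintro ⟨a, b⟩ ⟨c, d⟩
    change _ ≤ (5 : ℝ) * _
    have hac : |a - c| ≤ dist (a, b) (c, d) := le_max_left _ _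
    have hbd : |b - d| ≤ dist (a, b) (c, d) := le_max_right _ _
    generalize dist (a, b) (c, d) = D at *
    have hD : 0 ≤ D := (abs_nonneg _).trans hac
    apply max_le
    · change |b - d| ≤ _
      linarith
    · change |(psi a - 2 * b) - (psi c - 2 * d)| ≤ _
      have h3 := psi_lip a c
      calc |(psi a - 2 * b) - (psi c - 2 * d)| = |(psi a - psi c) - 2 * (b - d)| := by ring_nf
        _ ≤ |psi a - psi c| + |2 * (b - d)| := abs_sub _ _
        _ = |psi a - psi c| + 2 * |b - d| := by rw [abs_mul]; norm_num
        _ ≤ _ := by linarith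
  obtain ⟨α, hα0, hα⟩ := exists_global 5 _ hv (0, -lam)
  have hg : ∀ x ∈ Ici (0 : ℝ), HasDerivWithinAt (fun x => (α x).1) ((α x).2) (Ici 0) x :=
    fun x hx => (hα x hx).fst
  have hw : ∀ x ∈ Ici (0 : ℝ), HasDerivWithinAt (fun x => (α x).2)
      (psi (α x).1 - 2 * (α x).2) (Ici 0) x := fun x hx => (hα x hx).snd
  have hg0 : (α 0).1 = 0 := by rw [hα0]
  have hw0 : (α 0).2 = -lam := by rw [hα0]
  generalize hG : (fun x => (α x).1) = g at hg
  generalize hW : (fun x => (α x).2) = w at hw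
  have hG' : ∀ x, (α x).1 = g x := fun x => by rw [← hG]
  have hW' : ∀ x, (α x).2 = w x := fun x => by rw [← hW]
  simp only [hG', hW'] at hg hw hg0 hw0
  have hk : ∀ x ∈ Ici (0 : ℝ), HasDerivWithinAt (fun x => Real.exp x * (w x + g x))
      (Real.exp x * (psi (g x) + g x)) (Ici 0) x := by
    intro x hx
    convert! (Real.hasDerivAt_exp x).hasDerivWithinAt.mul ((hw x hx).add (hg x hx)) using 1
    simp only [Pi.add_apply]
    ring
  have hk' := antitoneOn_Ici hk (fun x _ =>
    mul_nonpos_of_nonneg_of_nonpos (Real.exp_pos _).le (psi_add_le _))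
  have hu : ∀ x ∈ Ici (0 : ℝ), HasDerivWithinAt (fun x => Real.exp x * g x)
      (Real.exp x * (w x + g x)) (Ici 0) x := by
    intro x hx
    convert! (Real.hasDerivAt_exp x).hasDerivWithinAt.mul (hg x hx) using 1
    ring
  have hu' := antitoneOn_Ici hu (fun x hx => by
    have := hk' self_mem_Ici hx hx
    simp only [hg0, hw0, Real.exp_zero] at this
    linarith)
  have hneg : ∀ x ∈ Ici (0 : ℝ), g x ≤ 0 := by
    intro x hx
    have := hu' self_mem_Ici hx hx
    simp only [hg0, mul_zero] at this
    have he := Real.exp_pos x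
    by_contra hcon
    push Not at hcon
    nlinarith [mul_pos he hcon]
  have hp : ∀ x ∈ Ici (0 : ℝ), HasDerivWithinAt (fun x => -(w x + 2 * g x))
      (-(psi (g x))) (Ici 0) x := by
    intro x hx
    convert! ((hw x hx).add ((hg x hx).const_mul 2)).neg using 1
    ring
  have hp' := antitoneOn_Ici hp (fun x hx => by linarith [psi_nonneg _ (hneg x hx)])
  have hlow : ∀ x ∈ Ici (0 : ℝ), -lam / 2 ≤ g x := by
    intro x hx
    have h3 := linear_le (h := fun x => -g x) (h' := fun x => - w x) (a := 0) (c := lam)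
      (fun x hx => (hg x hx).neg) (fun x hx => by
        have := hp' self_mem_Ici hx hx
        simp only [hg0, hw0] at this
        linarith) x hx
    simp only [hg0] at h3
    have := Real.exp_pos (-(2 * (x - 0)))
    nlinarith
  refine ⟨g, w, ⟨hg, fun x hx => ?_, hg0, hw0⟩, fun x hx => ⟨hlow x hx, hneg x hx⟩⟩
  rw [← psi_eq (g x) (hneg x hx) (by linarith [hlow x hx])]
  exact hw x hx

lemma IsPair.w_bounds {lam : ℝ} (h0 : 0 ≤ lam) (h2 : lam < 2) {g w : ℝ → ℝ}
    (h : IsPair lam g w) (hb : ∀ x ∈ Ici (0 : ℝ), -lam / 2 ≤ g x ∧ g x ≤ 0) :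
    ∀ x ∈ Ici (0 : ℝ), -lam ≤ w x ∧ w x ≤ lam / 4 := by
  intro x hx
  obtain ⟨hg, hw, hg0, hw0⟩ := h
  have he := Real.exp_pos (-(2 * (x - 0)))
  have he1 := exp_neg_le_one_of hx
  constructor
  · have h3 := linear_le (h := fun x => -w x) (h' := fun x => -(g x ^ 2 - 2 * w x)) (a := 0) (c := 0)
      (fun x hx => (hw x hx).neg) (fun x hx => by nlinarith [sq_nonneg (g x)]) x hx
    simp only [hw0] at h3
    nlinarith
  · have h3 := linear_le (h := w) (h' := fun x => g x ^ 2 - 2 * w x) (a := 0) (c := lam / 2)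
      hw (fun x hx => by
        obtain ⟨h4, h5⟩ := hb x hx
        nlinarith) x hx
    simp only [hw0] at h3
    nlinarith

lemma IsPair.decay {lam : ℝ} (h0 : 0 ≤ lam) (h2 : lam < 2) {g w : ℝ → ℝ}
    (h : IsPair lam g w) (hb : ∀ x ∈ Ici (0 : ℝ), -lam / 2 ≤ g x ∧ g x ≤ 0) :
    Tendsto g atTop (nhds 0) ∧ Tendsto w atTop (nhds 0) := by
  have hwb := h.w_bounds h0 h2 hb
  obtain ⟨hg, hw, hg0, hw0⟩ := h
  have hp : ∀ x ∈ Ici (0 : ℝ), HasDerivWithinAt (fun x => -(w x + 2 * g x))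
      (-(g x ^ 2)) (Ici 0) x := by
    intro x hx
    convert! ((hw x hx).add ((hg x hx).const_mul 2)).neg using 1
    ring
  have hp' := antitoneOn_Ici hp (fun x _ => by linarith [sq_nonneg (g x)])
  have hpb : ∀ x ∈ Ici (0 : ℝ), w x + 2 * g x ≤ 1 := fun x hx => by
    linarith [(hwb x hx).2, (hb x hx).2]
  obtain ⟨P, hP⟩ : ∃ P, Tendsto (fun x => w x + 2 * g x) atTop (nhds P) := by
    have hm : Monotone (fun x : ℝ => w (max 0 x) + 2 * g (max 0 x)) := by
      intro a b hab
      have := hp' (show max 0 a ∈ Ici (0 : ℝ) from mem_Ici.2 (le_max_left _ _))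
        (show max 0 b ∈ Ici (0 : ℝ) from mem_Ici.2 (le_max_left _ _)) (max_le_max le_rfl hab)
      simp only at this ⊢
      linarith
    have hbd : BddAbove (range (fun x : ℝ => w (max 0 x) + 2 * g (max 0 x))) := by
      refine ⟨1, ?_⟩
      rintro _ ⟨x, rfl⟩
      exact hpb _ (mem_Ici.2 (le_max_left _ _))
    refine ⟨_, (tendsto_atTop_ciSup hm hbd).congr' ?_⟩
    filter_upwards [eventually_ge_atTop 0] with x hx
    rw [max_eq_right hx]
  have hgP : Tendsto g atTop (nhds (P / 2)) := by
    have h3 := linear_tendsto (h := fun x => g x - P / 2) (h' := w)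
      (fun x hx => (hg x hx).sub_const _) (by
        have := hP.sub_const P
        rw [sub_self] at this
        exact this.congr fun x => by ring)
    have := h3.add_const (P / 2)
    rw [zero_add] at this
    exact this.congr fun x => by ring
  have hP0 : P = 0 := by
    by_contra hne
    have hc : 0 < P ^ 2 / 8 := by positivity
    have hev := (hgP.pow 2).eventually_const_lt (show P ^ 2 / 8 < (P / 2) ^ 2 by nlinarith)
    obtain ⟨a, ha⟩ := eventually_atTop.1 (hev.and (eventually_ge_atTop 0))
    have ha0 : 0 ≤ a := (ha a le_rfl).2
    generalize P ^ 2 / 8 = c at *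
    have hF : ∀ x ∈ Ici a, HasDerivWithinAt (fun x => -(w x + 2 * g x) + c * x)
        (-(g x ^ 2) + c * 1) (Ici a) x := fun x hx =>
      ((hp x (ha0.trans hx)).mono (Ici_subset_Ici.2 ha0)).add
        ((hasDerivWithinAt_id x _).const_mul c)
    have hF' := antitoneOn_Ici hF (fun x hx => by linarith [(ha x hx).1])
    have hpa := hpb a ha0
    have hd : 0 ≤ (3 - (w a + 2 * g a)) / c := div_nonneg (by linarith) hc.le
    have hxa : a ≤ a + (3 - (w a + 2 * g a)) / c := by linarith
    have h4 := hF' self_mem_Ici (show a + (3 - (w a + 2 * g a)) / c ∈ Ici a from hxa) hxa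
    have h5 := hpb _ (ha0.trans hxa)
    simp only [mul_add, mul_div_cancel₀ _ hc.ne'] at h4
    have h6 : c * ((3 - (w a + 2 * g a)) / c) = 3 - (w a + 2 * g a) := by field_simp
    linarith
  subst hP0
  rw [zero_div] at hgP
  refine ⟨hgP, ?_⟩
  have := hP.sub (hgP.const_mul 2)
  rw [mul_zero, sub_zero] at this
  exact this.congr fun x => by ring

/-- Existence, uniqueness (on `[0,∞)`), uniform bounds and decay at infinity of
the solution `g_λ` of `g'' + 2 g' = g²`, `g(0) = 0`, `g'(0) = -λ`, for `λ ∈ [0,2)`. -/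
theorem gLambda_exists_unique_bounds (lam : ℝ) (h0 : 0 ≤ lam) (h2 : lam < 2) :
    (∃ g : ℝ → ℝ, IsGSol lam g) ∧
    (∀ g₁ g₂ : ℝ → ℝ, IsGSol lam g₁ → IsGSol lam g₂ → Set.EqOn g₁ g₂ (Set.Ici 0)) ∧
    (∀ g : ℝ → ℝ, IsGSol lam g →
      (∀ x ∈ Set.Ici (0 : ℝ), -lam / 2 ≤ g x ∧ g x ≤ 0) ∧
      (∀ x ∈ Set.Ici (0 : ℝ), |derIci g x| ≤ 2 * lam) ∧
      Filter.Tendsto g Filter.atTop (nhds 0) ∧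
      Filter.Tendsto (derIci g) Filter.atTop (nhds 0)) := by
  obtain ⟨g, w, hgw, hb⟩ := exists_pair lam h0 h2
  refine ⟨⟨g, hgw.sol⟩, fun g₁ g₂ h₁ h₂ x hx =>
    ((isPair_of_sol h₁).unique (isPair_of_sol h₂) x hx).1, fun f hf => ?_⟩
  have hfp := isPair_of_sol hf
  have hfb : ∀ x ∈ Ici (0 : ℝ), -lam / 2 ≤ f x ∧ f x ≤ 0 := fun x hx => by
    rw [(hfp.unique hgw x hx).1]; exact hb x hx
  refine ⟨hfb, fun x hx => ?_, hfp.decay h0 h2 hfb⟩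
  obtain ⟨h3, h4⟩ := hfp.w_bounds h0 h2 hfb x hx
  rw [abs_le]
  constructor <;> linarith
end

section
/- Let λ ∈ (0,2). Then x₀ := inf{ x > 0 : g_λ'(x) = 0 } and x₁ := inf{ x > x₀ : g_λ''(x) = 0 } are finite and satisfy 0 < x₀ ≤ x₁; the function g_λ is strictly decreasing on [0,x₀] and strictly increasing on [x₀,∞); and the derivative g_λ' is strictly increasing on [0,x₁] and strictly decreasing on [x₁,∞). -/
open Set Filter

lemma first_zero {f : ℝ → ℝ} {a b : ℝ} (hab : a ≤ b) (hf : ContinuousOn f (Icc a b))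
    (ha : f a < 0) (hb : 0 ≤ f b) :
    ∃ z, a < z ∧ z ≤ b ∧ f z = 0 ∧ ∀ x, a ≤ x → x < z → f x < 0 := by
  have hc : IsCompact (Icc a b ∩ f ⁻¹' Ici 0) :=
    isCompact_Icc.of_isClosed_subset (hf.preimage_isClosed_of_isClosed isClosed_Icc isClosed_Ici)
      inter_subset_left
  obtain ⟨z, ⟨⟨hz1, hz2⟩, hz3⟩, hz⟩ := hc.exists_isLeast ⟨b, ⟨hab, le_rfl⟩, hb⟩
  have hz3 : 0 ≤ f z := hz3
  have hlt : ∀ x, a ≤ x → x < z → f x < 0 := by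
    intro x hx hxz
    by_contra h
    exact absurd (hz ⟨⟨hx, hxz.le.trans hz2⟩, not_lt.mp h⟩) (not_le.mpr hxz)
  have haz : a < z := by
    rcases hz1.lt_or_eq with h | h
    · exact h
    · subst h; linarith
  obtain ⟨c, hc, hc0⟩ := intermediate_value_Icc hz1 (hf.mono (Icc_subset_Icc_right hz2))
    (show (0 : ℝ) ∈ Icc (f a) (f z) from ⟨ha.le, hz3⟩)
  have : c = z := by
    by_contra hne
    have := hlt c hc.1 (lt_of_le_of_ne hc.2 hne)
    linarith
  exact ⟨z, haz, hz2, this ▸ hc0, hlt⟩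

/-- Barrier: a function which is negative initially and has negative derivative at zeros stays
negative. -/
lemma barrier {f f' : ℝ → ℝ} {a : ℝ} (hd : ∀ x, a ≤ x → HasDerivAt f (f' x) x)
    (ha : f a < 0) (h0 : ∀ x, a ≤ x → f x = 0 → f' x < 0) : ∀ x, a ≤ x → f x < 0 := by
  intro b hb
  by_contra hn
  obtain ⟨z, h1, h2, h3, h4⟩ := first_zero hb
    (fun x hx => (hd x hx.1).continuousAt.continuousWithinAt) ha (not_lt.mp hn)
  have hneg := h0 z h1.le h3
  have hs := hasDerivAt_iff_tendsto_slope.mp (hd z h1.le)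
  have hs2 : Tendsto (slope f z) (nhdsWithin z (Iio z)) (nhds (f' z)) :=
    hs.mono_left (nhdsWithin_mono _ (fun x hx => ne_of_lt hx))
  have : 0 ≤ f' z := by
    refine ge_of_tendsto hs2 ?_
    filter_upwards [Ioo_mem_nhdsLT h1] with x hx
    rw [slope_def_field, h3]
    exact div_nonneg_of_nonpos (by linarith [h4 x hx.1.le hx.2]) (by linarith [hx.2])
  linarith

/-- If derivative at least c, then linear growth. -/
lemma lin_growth {f f' : ℝ → ℝ} {a c : ℝ} (hd : ∀ x, a ≤ x → HasDerivAt f (f' x) x)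
    (h : ∀ x, a ≤ x → c ≤ f' x) : ∀ x, a ≤ x → f a + c * (x - a) ≤ f x := by
  intro x hx
  have := (convex_Ici a).mul_sub_le_image_sub_of_le_deriv (f := f) (C := c)
    (fun x hx => (hd x hx).continuousAt.continuousWithinAt)
    (fun x hx => (hd x (interior_subset hx)).differentiableAt.differentiableWithinAt)
    (fun x hx => by rw [(hd x (interior_subset hx)).deriv]; exact h x (interior_subset hx))
    a self_mem_Ici x hx hx
  linarith

/-- Blow-up. -/
lemma blowup {g p : ℝ → ℝ} {y : ℝ} (hg : ∀ x, y ≤ x → HasDerivAt g (p x) x)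
    (hp : ∀ x, y ≤ x → HasDerivAt p (g x ^ 2 - 2 * p x) x)
    (hpos : ∀ x, y ≤ x → 0 < p x) (hgy : 0 < g y) : False := by
  have hgm : ∀ x, y ≤ x → g y ≤ g x := by
    intro x hx
    have := lin_growth hg (c := 0) (fun x hx => (hpos x hx).le) x hx
    linarith
  have hg0 : ∀ x, y ≤ x → 0 < g x := fun x hx => hgy.trans_le (hgm x hx)
  set u : ℝ → ℝ := fun x => √(g x) with hu
  have hu0 : ∀ x, y ≤ x → 0 < u x := fun x hx => Real.sqrt_pos.mpr (hg0 x hx)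
  have hum : ∀ x, y ≤ x → u y ≤ u x := fun x hx => Real.sqrt_le_sqrt (hgm x hx)
  have hsq : ∀ x, y ≤ x → u x ^ 2 = g x := fun x hx => Real.sq_sqrt (hg0 x hx).le
  have hud : ∀ x, y ≤ x → HasDerivAt u (p x / (2 * u x)) x := fun x hx =>
    (hg x hx).sqrt (hg0 x hx).ne'
  obtain ⟨a, ha0, ha1, ha2, ha3⟩ : ∃ a : ℝ, 0 < a ∧ a ≤ 1 / 4 ∧ 8 * a ≤ u y ∧
      a * u y ^ 3 < p y := by
    have h3 : 0 < u y ^ 3 := pow_pos (hu0 y le_rfl) 3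
    have hq : 0 < p y / (2 * u y ^ 3) := div_pos (hpos y le_rfl) (by positivity)
    refine ⟨min (1/4) (min (u y / 8) (p y / (2 * u y ^ 3))), ?_, min_le_left _ _, ?_, ?_⟩
    · exact lt_min (by norm_num) (lt_min (by linarith [hu0 y le_rfl]) hq)
    · have : min (1/4) (min (u y / 8) (p y / (2 * u y ^ 3))) ≤ u y / 8 :=
        (min_le_right _ _).trans (min_le_left _ _)
      linarith
    · have : min (1/4) (min (u y / 8) (p y / (2 * u y ^ 3))) ≤ p y / (2 * u y ^ 3) :=
        (min_le_right _ _).trans (min_le_right _ _)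
      calc _ ≤ p y / (2 * u y ^ 3) * u y ^ 3 := by gcongr
        _ = p y / 2 := by
          have h := (hu0 y le_rfl).ne'
          field_simp
        _ < p y := by linarith [hpos y le_rfl]
  have hb : ∀ x, y ≤ x → a * u x ^ 3 - p x < 0 := by
    apply barrier (f := fun x => a * u x ^ 3 - p x)
      (f' := fun x => a * (3 * u x ^ 2 * (p x / (2 * u x))) - (g x ^ 2 - 2 * p x))
    · intro x hx
      have := (((hud x hx).pow 3).const_mul a).sub (hp x hx)
      exact this.congr_deriv (by simp)
    · linarith
    · intro x hx h
      have h := sub_eq_zero.mp h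
      have hux := hu0 x hx
      have huy := hum x hx
      rw [← hsq x hx, ← h]
      have e : a * (3 * u x ^ 2 * (a * u x ^ 3 / (2 * u x))) - ((u x ^ 2) ^ 2 - 2 * (a * u x ^ 3))
          = u x ^ 3 * (3 / 2 * a ^ 2 * u x - u x + 2 * a) := by
        field_simp
        ring
      rw [e]
      apply mul_neg_of_pos_of_neg (by positivity)
      have : a ^ 2 ≤ 1 / 16 := by nlinarith
      nlinarith
  -- w = -1/u has derivative ≥ a/2
  have hw : ∀ x, y ≤ x → HasDerivAt (fun x => -(u x)⁻¹) (p x / (2 * u x) / u x ^ 2) x := by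
    intro x hx
    have := ((hud x hx).inv (hu0 x hx).ne').neg
    exact this.congr_deriv (by simp only [neg_div, neg_neg])
  have hl := lin_growth hw (c := a / 2) (fun x hx => by
    have := hb x hx
    have hux := hu0 x hx
    rw [div_div, le_div_iff₀ (by positivity)]
    nlinarith)
  have h1 : 0 < (u y)⁻¹ := inv_pos.mpr (hu0 y le_rfl)
  have hx : y ≤ y + 2 * (u y)⁻¹ / a := by
    have : 0 < 2 * (u y)⁻¹ / a := by positivity
    linarith
  have h2 := hl _ hx
  have h3 : a / 2 * (y + 2 * (u y)⁻¹ / a - y) = (u y)⁻¹ := by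
    rw [add_sub_cancel_left]; field_simp
  have h4 := inv_pos.mpr (hu0 _ hx)
  rw [h3] at h2
  linarith

/-- Unimodality of `g_λ` for `λ ∈ (0,2)`: with
`x₀ = inf {x > 0 : g_λ'(x) = 0}` and `x₁ = inf {x > x₀ : g_λ''(x) = 0}`,
both infima are over nonempty sets, `0 < x₀ ≤ x₁`, `g_λ` is strictly
decreasing on `[0,x₀]` and strictly increasing on `[x₀,∞)`, and `g_λ'` is
strictly increasing on `[0,x₁]` and strictly decreasing on `[x₁,∞)`. -/
theorem gLambda_unimodal (lam : ℝ) (h1 : 0 < lam) (h2 : lam < 2)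
    (g : ℝ → ℝ) (hg : IsGSol lam g)
    (x0 x1 : ℝ)
    (hx0 : x0 = sInf {x : ℝ | 0 < x ∧ derIci g x = 0})
    (hx1 : x1 = sInf {x : ℝ | x0 < x ∧ derIci2 g x = 0}) :
    {x : ℝ | 0 < x ∧ derIci g x = 0}.Nonempty ∧
    {x : ℝ | x0 < x ∧ derIci2 g x = 0}.Nonempty ∧
    0 < x0 ∧ x0 ≤ x1 ∧
    StrictAntiOn g (Set.Icc 0 x0) ∧
    StrictMonoOn g (Set.Ici x0) ∧
    StrictMonoOn (derIci g) (Set.Icc 0 x1) ∧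
    StrictAntiOn (derIci g) (Set.Ici x1) := by
  obtain ⟨hgd, hpd, hode, hg0, hp0⟩ := hg
  set p := derIci g with hpdef
  have hgc : ContinuousOn g (Ici 0) := hgd.continuousOn
  have hpc : ContinuousOn p (Ici 0) := hpd.continuousOn
  have hode' : ∀ x, 0 ≤ x → derIci2 g x = g x ^ 2 - 2 * p x := fun x hx => by
    linarith [hode x hx]
  have hG : ∀ x, 0 < x → HasDerivAt g (p x) x := fun x hx =>
    ((hgd x hx.le).hasDerivWithinAt).hasDerivAt (Ici_mem_nhds hx)
  have hP : ∀ x, 0 < x → HasDerivAt p (g x ^ 2 - 2 * p x) x := fun x hx => by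
    rw [← hode' x hx.le]
    exact ((hpd x hx.le).hasDerivWithinAt).hasDerivAt (Ici_mem_nhds hx)
  -- existence of a nonnegative value of p
  obtain ⟨b, hb, hpb⟩ : ∃ b, 0 ≤ b ∧ 0 ≤ p b := by
    by_contra! hneg
    have hga : StrictAntiOn g (Ici 0) := strictAntiOn_of_deriv_neg (convex_Ici 0) hgc
      (fun x hx => by
        rw [interior_Ici] at hx
        rw [(hG x hx).deriv]; exact hneg x (le_of_lt hx))
    have hg1 : g 1 < 0 := by
      have := hga (mem_Ici.mpr le_rfl : (0:ℝ) ∈ Ici 0) (mem_Ici.mpr zero_le_one : (1:ℝ) ∈ Ici 0) one_pos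
      linarith
    have hgle : ∀ x, 1 ≤ x → g x ≤ g 1 := fun x hx =>
      hga.antitoneOn (mem_Ici.mpr zero_le_one : (1:ℝ) ∈ Ici 0)
        (show (0:ℝ) ≤ x by linarith) hx
    have hl := lin_growth (f := fun x => p x + 2 * g x) (f' := fun x => g x ^ 2) (a := 1)
      (c := g 1 ^ 2) (fun x hx => by
        have := (hP x (by linarith)).add ((hG x (by linarith)).const_mul 2)
        exact this.congr_deriv (by ring)) (fun x hx => by nlinarith [hgle x hx])
    have hsq : 0 < g 1 ^ 2 := by nlinarith
    have hA : 0 ≤ |p 1 + 2 * g 1| / g 1 ^ 2 := by positivity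
    have := hl (1 + |p 1 + 2 * g 1| / g 1 ^ 2) (by linarith)
    have e : g 1 ^ 2 * (1 + |p 1 + 2 * g 1| / g 1 ^ 2 - 1) = |p 1 + 2 * g 1| := by
      rw [add_sub_cancel_left, mul_div_cancel₀ _ hsq.ne']
    rw [e] at this
    have h3 := hgle (1 + |p 1 + 2 * g 1| / g 1 ^ 2) (by linarith)
    have h4 := hneg (1 + |p 1 + 2 * g 1| / g 1 ^ 2) (by linarith)
    have h5 := neg_abs_le (p 1 + 2 * g 1)
    linarith
  obtain ⟨z, hz0, -, hpz, hpneg⟩ := first_zero hb (hpc.mono Icc_subset_Ici_self)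
    (by linarith) hpb
  have hganti : StrictAntiOn g (Icc 0 z) := strictAntiOn_of_deriv_neg (convex_Icc 0 z)
    (hgc.mono Icc_subset_Ici_self) (fun x hx => by
      rw [interior_Icc] at hx
      rw [(hG x hx.1).deriv]; exact hpneg x hx.1.le hx.2)
  have hgneg1 : ∀ x, 0 < x → x ≤ z → g x < 0 := fun x hx hxz => by
    have := hganti ⟨le_rfl, hz0.le⟩ ⟨hx.le, hxz⟩ hx
    linarith
  have hE : ∀ x : ℝ, HasDerivAt (fun x => Real.exp (2 * x)) (2 * Real.exp (2 * x)) x := fun x => by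
    have := ((hasDerivAt_id x).const_mul 2).exp
    exact this.congr_deriv (by simp; ring)
  have hEc : Continuous (fun x : ℝ => Real.exp (2 * x)) := by fun_prop
  have hQ : ∀ x, 0 < x → HasDerivAt (fun x => Real.exp (2 * x) * p x)
      (Real.exp (2 * x) * g x ^ 2) x := fun x hx => by
    have := (hE x).mul (hP x hx)
    exact this.congr_deriv (by ring)
  have hK : ∀ x, 0 < x → HasDerivAt (fun x => Real.exp (2 * x) * (g x ^ 2 - 2 * p x))
      (Real.exp (2 * x) * (2 * (g x * p x))) x := fun x hx => by
    have := (hE x).mul (((hG x hx).pow 2).sub ((hP x hx).const_mul 2))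
    exact this.congr_deriv (by simp; ring)
  have hQm : MonotoneOn (fun x => Real.exp (2 * x) * p x) (Ici 0) :=
    monotoneOn_of_deriv_nonneg (convex_Ici 0) (hEc.continuousOn.mul hpc)
      (fun x hx => by
        rw [interior_Ici] at hx
        exact (hQ x hx).differentiableAt.differentiableWithinAt)
      (fun x hx => by
        rw [interior_Ici] at hx
        rw [(hQ x hx).deriv]; positivity)
  have hpnn : ∀ x, z ≤ x → 0 ≤ p x := fun x hx => by
    have := hQm (show z ∈ Ici 0 from hz0.le) (show x ∈ Ici 0 from hz0.le.trans hx) hx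
    simp only [hpz, mul_zero] at this
    exact nonneg_of_mul_nonneg_right this (Real.exp_pos _)
  have hppos : ∀ x, z < x → 0 < p x := by
    intro x hx
    refine (hpnn x hx.le).lt_of_ne' fun hpx => ?_
    have hz' : ∀ t, z ≤ t → t ≤ x → p t = 0 := fun t h1 h2 => by
      have := hQm (show t ∈ Ici 0 from hz0.le.trans h1) (show x ∈ Ici 0 from hz0.le.trans hx.le) h2
      simp only [hpx, mul_zero] at this
      have h3 := Real.exp_pos (2 * t)
      have := hpnn t h1
      nlinarith
    obtain ⟨c, hc, hc'⟩ := exists_hasDerivAt_eq_slope _ _ hx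
      (fun t ht => (hQ t (hz0.trans_le ht.1)).continuousAt.continuousWithinAt)
      (fun t ht => hQ t (hz0.trans ht.1))
    simp only [hpx, hpz, mul_zero, sub_zero, zero_div] at hc'
    have hgc0 : g c = 0 := by
      simpa [Real.exp_ne_zero] using hc'
    obtain ⟨d, hd, hd'⟩ := exists_hasDerivAt_eq_slope g p hc.1
      (fun t ht => (hG t (hz0.trans_le ht.1)).continuousAt.continuousWithinAt)
      (fun t ht => hG t (hz0.trans ht.1))
    rw [hz' d hd.1.le (hd.2.le.trans hc.2.le), hgc0, eq_div_iff (by linarith [hc.1])] at hd'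
    linarith [hgneg1 z hz0 le_rfl]
  have hS0 : {x : ℝ | 0 < x ∧ p x = 0} = {z} := by
    ext x
    simp only [mem_ofPred_eq, mem_singleton_iff]
    constructor
    · rintro ⟨h, h'⟩
      rcases lt_trichotomy x z with h3 | h3 | h3
      · linarith [hpneg x h.le h3]
      · exact h3
      · linarith [hppos x h3]
    · rintro rfl; exact ⟨hz0, hpz⟩
  rw [hS0, csInf_singleton] at hx0
  subst hx0
  have hgmono : StrictMonoOn g (Ici x0) := strictMonoOn_of_deriv_pos (convex_Ici x0)
    (hgc.mono (Ici_subset_Ici.mpr hz0.le)) (fun x hx => by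
      rw [interior_Ici] at hx
      rw [(hG x (hz0.trans hx)).deriv]; exact hppos x hx)
  have hgneg : ∀ x, 0 < x → g x < 0 := by
    intro x hx
    rcases le_or_gt x x0 with h | h
    · exact hgneg1 x hx h
    by_contra hn
    refine blowup (g := g) (p := p) (y := x + 1) (fun t ht => hG t (by linarith))
      (fun t ht => hP t (by linarith)) (fun t ht => hppos t (by linarith)) ?_
    have := hgmono (show x ∈ Ici x0 from h.le) (show x0 ≤ x + 1 by linarith) (by linarith)
    linarith
  set k : ℝ → ℝ := fun x => Real.exp (2 * x) * (g x ^ 2 - 2 * p x) with hk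
  have hkc : ContinuousOn k (Ici 0) :=
    hEc.continuousOn.mul ((hgc.pow 2).sub (continuousOn_const.mul hpc))
  have hkmono : StrictMonoOn k (Icc 0 x0) := strictMonoOn_of_deriv_pos (convex_Icc 0 x0)
    (hkc.mono Icc_subset_Ici_self) (fun x hx => by
      rw [interior_Icc] at hx
      rw [(hK x hx.1).deriv]
      have := mul_pos_of_neg_of_neg (hgneg x hx.1) (hpneg x hx.1.le hx.2)
      positivity)
  have hkanti : StrictAntiOn k (Ici x0) := strictAntiOn_of_deriv_neg (convex_Ici x0)
    (hkc.mono (Ici_subset_Ici.mpr hz0.le)) (fun x hx => by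
      rw [interior_Ici] at hx
      rw [(hK x (hz0.trans hx)).deriv]
      have := mul_neg_of_neg_of_pos (hgneg x (hz0.trans hx)) (hppos x hx)
      exact mul_neg_of_pos_of_neg (Real.exp_pos _) (by linarith))
  have hk0 : 0 < k 0 := by simp [hk, hg0, hp0, h1]
  have hkpos1 : ∀ x, 0 ≤ x → x ≤ x0 → 0 < k x := fun x hx hx' =>
    hk0.trans_le (hkmono.monotoneOn ⟨le_rfl, hz0.le⟩ ⟨hx, hx'⟩ hx)
  obtain ⟨c, hc, hkc0⟩ : ∃ c, x0 ≤ c ∧ k c ≤ 0 := by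
    by_contra! hpos
    have hpm : ∀ x, x0 + 1 ≤ x → p (x0 + 1) ≤ p x := by
      intro x hx
      have := lin_growth (f := p) (a := x0 + 1) (c := 0) (fun t ht => hP t (by linarith))
        (fun t ht => (pos_of_mul_pos_right (hpos t (by linarith)) (Real.exp_pos _).le).le) x hx
      linarith
    have hpp := hppos (x0 + 1) (by linarith)
    have hgg := hgneg (x0 + 1) (by linarith)
    have hA : 0 < -g (x0 + 1) / p (x0 + 1) := div_pos (by linarith) hpp
    have := lin_growth (fun t (ht : x0 + 1 ≤ t) => hG t (by linarith)) hpm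
      (x0 + 1 + -g (x0 + 1) / p (x0 + 1)) (by linarith)
    rw [add_sub_cancel_left, mul_div_cancel₀ _ hpp.ne'] at this
    linarith [hgneg (x0 + 1 + -g (x0 + 1) / p (x0 + 1)) (by linarith)]
  obtain ⟨w, hw0, -, hkw, hkpos2⟩ := first_zero (f := fun x => -k x) hc
    ((hkc.mono ((Icc_subset_Ici_self).trans (Ici_subset_Ici.mpr hz0.le))).neg)
    (by linarith [hkpos1 x0 hz0.le le_rfl]) (by linarith)
  have hkw : k w = 0 := by linarith
  have hkpos : ∀ x, 0 ≤ x → x < w → 0 < k x := fun x hx hxw => by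
    rcases le_or_gt x x0 with h | h
    · exact hkpos1 x hx h
    · linarith [hkpos2 x h.le hxw]
  have hkneg : ∀ x, w < x → k x < 0 := fun x hx => by
    have := hkanti (show w ∈ Ici x0 from hw0.le) (show x ∈ Ici x0 from hw0.le.trans hx.le) hx
    linarith
  have hS1 : {x : ℝ | x0 < x ∧ derIci2 g x = 0} = {w} := by
    ext x
    simp only [mem_ofPred_eq, mem_singleton_iff]
    constructor
    · rintro ⟨h, h'⟩
      rw [hode' x (by linarith)] at h'
      have hkx : k x = 0 := by simp only [hk, h', mul_zero]
      rcases lt_trichotomy x w with h3 | h3 | h3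
      · linarith [hkpos x (by linarith) h3]
      · exact h3
      · linarith [hkneg x h3]
    · rintro rfl
      refine ⟨hw0, ?_⟩
      rw [hode' x (by linarith)]
      exact (mul_eq_zero.mp hkw).resolve_left (Real.exp_ne_zero _)
  rw [hS1, csInf_singleton] at hx1
  subst hx1
  refine ⟨hS0 ▸ singleton_nonempty _, hS1 ▸ singleton_nonempty _, hz0, hw0.le, hganti, hgmono,
    ?_, ?_⟩
  · refine strictMonoOn_of_deriv_pos (convex_Icc 0 x1) (hpc.mono Icc_subset_Ici_self)
      (fun x hx => ?_)
    rw [interior_Icc] at hx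
    rw [(hP x hx.1).deriv]
    exact pos_of_mul_pos_right (hkpos x hx.1.le hx.2) (Real.exp_pos _).le
  · refine strictAntiOn_of_deriv_neg (convex_Ici x1)
      (hpc.mono (Ici_subset_Ici.mpr (hz0.le.trans hw0.le))) (fun x hx => ?_)
    rw [interior_Ici] at hx
    have hx : x1 < x := hx
    rw [(hP x (by linarith)).deriv]
    exact neg_of_mul_neg_right (hkneg x hx) (Real.exp_pos _).le
end

section
/- For every fixed λ ∈ (0,1), one has x · g_λ(x) → −2 as x → ∞. Moreover, for every fixed μ > 0, one has x · g_{μ/x}(x) → −2μ/(μ+4) as x → ∞. -/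
open Set Filter

open Topology

lemma mono_aux (f f' : ℝ → ℝ) (h : ∀ x, 0 ≤ x → HasDerivWithinAt f (f' x) (Ici 0) x)
    (h' : ∀ x, 0 ≤ x → 0 ≤ f' x) : MonotoneOn f (Ici 0) := by
  apply monotoneOn_of_hasDerivWithinAt_nonneg (f' := f') (convex_Ici 0)
  · exact fun x hx => (h x hx).continuousWithinAt
  · intro x hx
    exact (h x (interior_subset hx)).mono interior_subset
  · intro x hx
    exact h' x (interior_subset hx)

lemma ge_aux (f f' : ℝ → ℝ) (h : ∀ x, 0 ≤ x → HasDerivWithinAt f (f' x) (Ici 0) x)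
    (h' : ∀ x, 0 ≤ x → 0 ≤ f' x) (x : ℝ) (hx : 0 ≤ x) : f 0 ≤ f x :=
  mono_aux f f' h h' (mem_Ici.2 le_rfl) (mem_Ici.2 hx) hx

lemma exp_deriv (c x : ℝ) :
    HasDerivWithinAt (fun x => Real.exp (c * x)) (c * Real.exp (c * x)) (Ici 0) x := by
  have := (((hasDerivAt_id x).const_mul c).exp).hasDerivWithinAt (s := Ici 0)
  refine HasDerivWithinAt.congr_deriv this ?_
  simp [mul_comm]

lemma bounds (lam : ℝ) (h0 : 0 < lam) (h1 : lam < 1) (u v : ℝ → ℝ)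
    (hu : ∀ x, 0 ≤ x → HasDerivWithinAt u (v x) (Ici 0) x)
    (hv : ∀ x, 0 ≤ x → HasDerivWithinAt v (-2 * v x - u x ^ 2) (Ici 0) x)
    (hu0 : u 0 = 0) (hv0 : v 0 = lam) (x : ℝ) (hx : 0 ≤ x) :
    ∃ r q : ℝ, u x = r / q ∧ 1 / 2 - Real.exp (-2 * x) / 2 ≤ r ∧ r ≤ 1 / 2 + 4 / (x + 1) ∧
      1 / lam - 1 / 4 + x / 4 ≤ q ∧ q ≤ 1 / lam + x / 4 + 20 * Real.log (x + 1) := by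
  -- w ≤ lam
  have hwle : ∀ x, 0 ≤ x → v x + 2 * u x ≤ lam := by
    intro x hx
    have := ge_aux (fun x => -(v x + 2 * u x)) (fun x => u x ^ 2)
      (fun x hx => by
        refine HasDerivWithinAt.congr_deriv (((hv x hx).add ((hu x hx).const_mul 2)).neg) ?_
        ring) (fun x _ => sq_nonneg _) x hx
    simp only [hu0, hv0] at this
    linarith
  -- u ≤ 1
  have hu1 : ∀ x, 0 ≤ x → u x ≤ 1 := by
    intro x hx
    have := ge_aux (fun x => Real.exp (2 * x) * (1 - u x))
      (fun x => Real.exp (2 * x) * (2 - (v x + 2 * u x)))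
      (fun x hx => by
        refine HasDerivWithinAt.congr_deriv ((exp_deriv 2 x).mul ((hu x hx).const_sub 1)) ?_
        ring) (fun x hx => by
          have := hwle x hx
          have : 0 ≤ 2 - (v x + 2 * u x) := by linarith
          positivity) x hx
    simp only [hu0] at this
    have h3 := Real.exp_pos (2 * x)
    have h4 : 0 < Real.exp (2 * x) * (1 - u x) := by
      refine lt_of_lt_of_le ?_ this
      simp
    have := (mul_pos_iff_of_pos_left h3).1 h4
    linarith
  have hyd : ∀ x, 0 ≤ x → HasDerivWithinAt (fun x => Real.exp (1 * x) * u x)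
      (Real.exp (1 * x) * (v x + u x)) (Ici 0) x := fun x hx => by
    refine HasDerivWithinAt.congr_deriv ((exp_deriv 1 x).mul (hu x hx)) ?_
    ring
  have hzd : ∀ x, 0 ≤ x → HasDerivWithinAt (fun x => Real.exp (1 * x) * (v x + u x))
      (Real.exp (1 * x) * (u x * (1 - u x))) (Ici 0) x := fun x hx => by
    refine HasDerivWithinAt.congr_deriv ((exp_deriv 1 x).mul ((hv x hx).add (hu x hx))) ?_
    ring
  have hyz : ∀ x, 0 ≤ x →
      0 ≤ (Real.exp (1 * x) * u x) * (Real.exp (1 * x) * (v x + u x)) := by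
    intro x hx
    have := ge_aux _ _ (fun x hx => (hyd x hx).mul (hzd x hx)) (fun x hx => by
      have h2 : 0 ≤ 1 - u x := by linarith [hu1 x hx]
      have : Real.exp (1 * x) * (v x + u x) * (Real.exp (1 * x) * (v x + u x)) +
        Real.exp (1 * x) * u x * (Real.exp (1 * x) * (u x * (1 - u x))) =
        (Real.exp (1 * x) * (v x + u x)) ^ 2 + (Real.exp (1 * x) * u x) ^ 2 * (1 - u x) := by ring
      rw [this]
      positivity) x hx
    simpa [hu0] using this
  have hymono : MonotoneOn (fun x => (Real.exp (1 * x) * u x) ^ 2) (Ici 0) :=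
    mono_aux _ _ (fun x hx => (hyd x hx).pow 2) (fun x hx => by
      have := hyz x hx
      norm_num at this ⊢
      nlinarith)
  have hun : ∀ x, 0 ≤ x → 0 ≤ u x := by
    intro x hx
    by_contra hneg
    push Not at hneg
    have hx0 : 0 < x := by
      rcases hx.eq_or_lt with h | h
      · rw [← h, hu0] at hneg; exact absurd hneg (lt_irrefl _)
      · exact h
    have hev : ∀ᶠ t in 𝓝[>] (0:ℝ), 0 < u t := by
      have h := (hu 0 le_rfl)
      rw [hasDerivWithinAt_iff_tendsto_slope, hv0] at h
      have hs : Ici (0:ℝ) \ {0} = Ioi 0 := by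
        ext t; simp [lt_iff_le_and_ne, eq_comm]
      rw [hs] at h
      filter_upwards [h.eventually (lt_mem_nhds h0), self_mem_nhdsWithin] with t ht ht0
      rw [slope_def_field, hu0] at ht
      have ht0 : (0:ℝ) < t := ht0
      simp only [sub_zero] at ht
      exact (div_pos_iff_of_pos_right ht0).1 ht
    obtain ⟨t, ht, ht1⟩ := (hev.and (Ioo_mem_nhdsGT hx0)).exists
    have hc : ContinuousOn u (Icc t x) := fun y hy =>
      ((hu y (ht1.1.le.trans hy.1)).continuousWithinAt).mono
        (fun z hz => ht1.1.le.trans hz.1)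
    obtain ⟨c, hc1, hc2⟩ := intermediate_value_Icc' ht1.2.le hc ⟨hneg.le, ht.le⟩
    have := hymono (mem_Ici.2 ht1.1.le) (mem_Ici.2 (ht1.1.le.trans hc1.1)) hc1.1
    simp only [hc2] at this
    have h5 : 0 < (Real.exp (1 * t) * u t) ^ 2 := by positivity
    simp at this
    simp at h5
    linarith
  have hs : ∀ x, 0 ≤ x → 0 < v x + u x := by
    intro x hx
    have := ge_aux _ _ hzd (fun x hx => by
      have h2 : 0 ≤ 1 - u x := by linarith [hu1 x hx]
      have := hun x hx
      positivity) x hx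
    simp only [hu0, hv0] at this
    have h3 := Real.exp_pos (1 * x)
    have h4 : 0 < Real.exp (1 * x) * (v x + u x) := by
      refine lt_of_lt_of_le ?_ this
      simpa using h0
    exact (mul_pos_iff_of_pos_left h3).1 h4
  have hw : ∀ x, 0 ≤ x → 0 < v x + 2 * u x := fun x hx => by
    linarith [hs x hx, hun x hx]
  have hwd : ∀ x, 0 ≤ x → HasDerivWithinAt (fun x => v x + 2 * u x) (-u x ^ 2) (Ici 0) x :=
    fun x hx => by
      refine HasDerivWithinAt.congr_deriv ((hv x hx).add ((hu x hx).const_mul 2)) ?_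
      ring
  obtain ⟨r, hr⟩ : ∃ r : ℝ → ℝ, r = fun x => u x / (v x + 2 * u x) := ⟨_, rfl⟩
  obtain ⟨q, hq⟩ : ∃ q : ℝ → ℝ, q = fun x => (v x + 2 * u x)⁻¹ := ⟨_, rfl⟩
  have hr0 : r 0 = 0 := by simp [hr, hu0]
  have hq0 : q 0 = 1 / lam := by simp [hq, hu0, hv0]
  have hrn : ∀ x, 0 ≤ x → 0 ≤ r x := fun x hx => by
    rw [hr]; exact div_nonneg (hun x hx) (hw x hx).le
  have hr1 : ∀ x, 0 ≤ x → r x ≤ 1 := fun x hx => by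
    rw [hr]; exact (div_le_one (hw x hx)).2 (by linarith [hs x hx])
  have hrd : ∀ x, 0 ≤ x → HasDerivWithinAt r (1 - 2 * r x + r x ^ 2 * u x) (Ici 0) x :=
    fun x hx => by
      have hne := (hw x hx).ne'
      rw [hr]
      refine HasDerivWithinAt.congr_deriv ((hu x hx).div (hwd x hx) hne) ?_
      field_simp
      ring
  have hqd : ∀ x, 0 ≤ x → HasDerivWithinAt q (r x ^ 2) (Ici 0) x :=
    fun x hx => by
      have hne := (hw x hx).ne'
      rw [hr, hq]
      refine HasDerivWithinAt.congr_deriv ((hwd x hx).inv hne) ?_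
      field_simp
  have hrlow : ∀ x, 0 ≤ x → 1 / 2 - Real.exp (-2 * x) / 2 ≤ r x := by
    intro x hx
    have := ge_aux _ _ (fun x hx => (exp_deriv 2 x).mul ((hrd x hx).sub_const (1/2)))
      (fun x hx => by
        have : 2 * Real.exp (2 * x) * (r x - 1 / 2) +
          Real.exp (2 * x) * (1 - 2 * r x + r x ^ 2 * u x) =
          Real.exp (2 * x) * (r x ^ 2 * u x) := by ring
        have h2 := hun x hx
        rw [this]
        positivity) x hx
    simp only [Pi.mul_apply, hr0, mul_zero, Real.exp_zero] at this
    have h3 := Real.exp_pos (-2 * x)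
    have h4 : Real.exp (-2 * x) * Real.exp (2 * x) = 1 := by
      rw [← Real.exp_add]; simp
    have h5 := mul_le_mul_of_nonneg_left this h3.le
    rw [← mul_assoc (Real.exp (-2 * x)) (Real.exp (2 * x)), h4] at h5
    linarith
  have hqlow : ∀ x, 0 ≤ x → 1 / lam - 1 / 4 + x / 4 ≤ q x := by
    intro x hx
    have := ge_aux (fun x => q x - (1/4) * x - (1/4) * Real.exp (-2 * x))
      (fun x => r x ^ 2 - (1/4) * 1 - (1/4) * (-2 * Real.exp (-2 * x)))
      (fun x hx => ((hqd x hx).sub ((hasDerivWithinAt_id x _).const_mul (1/4))).sub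
        ((exp_deriv (-2) x).const_mul (1/4)))
      (fun x hx => by nlinarith [hrlow x hx, sq_nonneg (r x - 1/2)]) x hx
    simp only [hq0, mul_zero, Real.exp_zero] at this
    linarith [Real.exp_pos (-2 * x)]
  have hlam : 1 < 1 / lam := by rw [lt_div_iff₀ h0]; linarith
  have huq : ∀ x, 0 ≤ x → u x ≤ 4 / (x + 1) := by
    intro x hx
    have h2 := hqlow x hx
    have hq' : (x + 1) / 4 ≤ q x := by linarith
    have hww := hw x hx
    have : v x + 2 * u x ≤ 4 / (x + 1) := by
      rw [le_div_iff₀ (by linarith)]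
      have : q x * (v x + 2 * u x) = 1 := by rw [hq]; exact inv_mul_cancel₀ hww.ne'
      nlinarith
    linarith [hs x hx]
  have hid : ∀ x : ℝ, 0 ≤ x → HasDerivWithinAt (fun x : ℝ => x + 1) 1 (Ici 0) x := fun x hx =>
    (hasDerivWithinAt_id x _).add_const 1
  have hrup : ∀ x, 0 ≤ x → r x ≤ 1 / 2 + 4 / (x + 1) := by
    intro x hx
    have := ge_aux (fun x => Real.exp (2 * x) * (4 * (x + 1)⁻¹ - (r x - 1/2))) _
      (fun x hx => (exp_deriv 2 x).mul
        ((((hid x hx).inv (by linarith)).const_mul 4).sub ((hrd x hx).sub_const (1/2))))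
      (fun x hx => by
        have hp : 0 < x + 1 := by linarith
        have h2 : u x ≤ 4 * (x+1)⁻¹ := huq x hx
        have h3 : r x ^ 2 * u x ≤ u x := by
          have : r x ^ 2 ≤ 1 := by nlinarith [hr1 x hx, hrn x hx]
          nlinarith [hun x hx]
        have h4 : (x+1)⁻¹ ≤ 1 := inv_le_one_of_one_le₀ (by linarith)
        have h5 : 0 < (x+1)⁻¹ := by positivity
        have h6 : -1 / (x+1)^2 = -((x+1)⁻¹)^2 := by field_simp
        have h7 : 0 ≤ 4 * (x+1)⁻¹ - 4 * ((x+1)⁻¹)^2 + (4 * (x+1)⁻¹ - r x ^ 2 * u x) := by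
          nlinarith
        have := mul_nonneg (Real.exp_pos (2 * x)).le h7
        simp only [h6]
        try simp only [Pi.inv_apply]
        linarith) x hx
    simp only [hr0, mul_zero, Real.exp_zero] at this
    have h3 := Real.exp_pos (2 * x)
    have h4 : 0 < Real.exp (2 * x) * (4 * (x + 1)⁻¹ - (r x - 1/2)) := by
      refine lt_of_lt_of_le ?_ this
      norm_num
    have := (mul_pos_iff_of_pos_left h3).1 h4
    rw [div_eq_mul_inv 4]
    linarith
  have hqup : ∀ x, 0 ≤ x → q x ≤ 1 / lam + x / 4 + 20 * Real.log (x + 1) := by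
    intro x hx
    have := ge_aux (fun x => (1/4) * x + 20 * Real.log (x + 1) - q x)
      (fun x => (1/4) * 1 + 20 * (1 / (x+1)) - r x ^ 2)
      (fun x hx => (((hasDerivWithinAt_id x _).const_mul (1/4)).add
        (((hid x hx).log (by linarith)).const_mul 20)).sub (hqd x hx))
      (fun x hx => by
        have hp : 0 < x + 1 := by linarith
        have h4 : 1 / (x+1) ≤ 1 := by rw [div_le_one hp]; linarith
        have h5 : 0 < 1 / (x+1) := by positivity
        have h6 := hrup x hx
        have h7 : 4 / (x+1) = 4 * (1 / (x+1)) := by ring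
        rw [h7] at h6
        have : r x ^ 2 ≤ (1/2 + 4 * (1 / (x+1))) ^ 2 := pow_le_pow_left₀ (hrn x hx) h6 2
        nlinarith) x hx
    simp only [hq0, mul_zero, zero_add, Real.log_one] at this
    linarith
  refine ⟨r x, q x, ?_, hrlow x hx, hrup x hx, hqlow x hx, hqup x hx⟩
  have := (hw x hx).ne'
  rw [hr, hq]
  simp only [div_inv_eq_mul]
  rw [div_mul_cancel₀ _ this]

lemma sol_bounds (lam : ℝ) (h0 : 0 < lam) (h1 : lam < 1) (g : ℝ → ℝ) (hg : IsGSol lam g)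
    (x : ℝ) (hx : 0 ≤ x) :
    ∃ r q : ℝ, g x = -(r / q) ∧ 1 / 2 - Real.exp (-2 * x) / 2 ≤ r ∧ r ≤ 1 / 2 + 4 / (x + 1) ∧
      1 / lam - 1 / 4 + x / 4 ≤ q ∧ q ≤ 1 / lam + x / 4 + 20 * Real.log (x + 1) := by
  obtain ⟨hd, hd2, he, hg0, hg1⟩ := hg
  obtain ⟨r, q, h, h'⟩ := bounds lam h0 h1 (fun x => -g x) (fun x => -derIci g x)
    (fun x hx => ((hd x hx).hasDerivWithinAt).neg)
    (fun x hx => by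
      refine HasDerivWithinAt.congr_deriv ((hd2 x hx).hasDerivWithinAt).neg ?_
      have := he x hx
      unfold derIci2 at this
      linarith) (by simp [hg0]) (by simp [hg1]) x hx
  exact ⟨r, q, by linarith, h'⟩

lemma lim_aux (lam : ℝ → ℝ) (G : ℝ → ℝ) (L : ℝ) (hL : 0 ≤ L)
    (hl : Tendsto (fun x => 1 / lam x / x) atTop (𝓝 L))
    (h : ∀ᶠ x in atTop, ∃ r q : ℝ, G x = -(r / q) ∧ 1 / 2 - Real.exp (-2 * x) / 2 ≤ r ∧
      r ≤ 1 / 2 + 4 / (x + 1) ∧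
      1 / lam x - 1 / 4 + x / 4 ≤ q ∧ q ≤ 1 / lam x + x / 4 + 20 * Real.log (x + 1)) :
    Tendsto (fun x => x * G x) atTop (𝓝 (-((1/2) / (L + 1/4)))) := by
  have h' : ∀ x, ∃ r q : ℝ, (∃ r q : ℝ, G x = -(r / q) ∧ 1 / 2 - Real.exp (-2 * x) / 2 ≤ r ∧
      r ≤ 1 / 2 + 4 / (x + 1) ∧
      1 / lam x - 1 / 4 + x / 4 ≤ q ∧ q ≤ 1 / lam x + x / 4 + 20 * Real.log (x + 1)) →
      G x = -(r / q) ∧ 1 / 2 - Real.exp (-2 * x) / 2 ≤ r ∧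
      r ≤ 1 / 2 + 4 / (x + 1) ∧
      1 / lam x - 1 / 4 + x / 4 ≤ q ∧ q ≤ 1 / lam x + x / 4 + 20 * Real.log (x + 1) := by
    intro x
    by_cases hh : ∃ r q : ℝ, G x = -(r / q) ∧ 1 / 2 - Real.exp (-2 * x) / 2 ≤ r ∧
      r ≤ 1 / 2 + 4 / (x + 1) ∧
      1 / lam x - 1 / 4 + x / 4 ≤ q ∧ q ≤ 1 / lam x + x / 4 + 20 * Real.log (x + 1)
    · obtain ⟨r, q, h⟩ := hh
      exact ⟨r, q, fun _ => h⟩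
    · exact ⟨0, 0, fun h => absurd h hh⟩
  choose r q hrq using h'
  have hx1 : Tendsto (fun x : ℝ => x + 1) atTop atTop := tendsto_atTop_add_const_right _ _ tendsto_id
  have hr : Tendsto r atTop (𝓝 (1/2)) := by
    have ha : Tendsto (fun x : ℝ => 1 / 2 - Real.exp (-2 * x) / 2) atTop (𝓝 (1/2 - 0/2)) := by
      refine tendsto_const_nhds.sub (Tendsto.div_const ?_ _)
      exact Real.tendsto_exp_atBot.comp (tendsto_id.const_mul_atTop_of_neg (by norm_num))
    have hb : Tendsto (fun x : ℝ => 1 / 2 + 4 / (x + 1)) atTop (𝓝 (1/2 + 0)) :=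
      tendsto_const_nhds.add (hx1.const_div_atTop 4)
    simp only [zero_div, sub_zero, add_zero] at ha hb
    refine tendsto_of_tendsto_of_tendsto_of_le_of_le' ha hb ?_ ?_
    · filter_upwards [h] with x hx using (hrq x hx).2.1
    · filter_upwards [h] with x hx using (hrq x hx).2.2.1
  have hq : Tendsto (fun x => q x / x) atTop (𝓝 (L + 1/4)) := by
    have hlog : Tendsto (fun x : ℝ => Real.log (x + 1) / x) atTop (𝓝 0) := by
      have h1 : Tendsto (fun x : ℝ => Real.log (x + 1) / (x + 1)) atTop (𝓝 0) :=
        (Real.isLittleO_log_id_atTop.tendsto_div_nhds_zero).comp hx1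
      have h2 : Tendsto (fun x : ℝ => 1 + 1 / x) atTop (𝓝 (1 + 0)) :=
        tendsto_const_nhds.add (tendsto_id.const_div_atTop 1)
      have h3 := h1.mul h2
      rw [zero_mul] at h3
      refine h3.congr' ?_
      filter_upwards [eventually_gt_atTop 0] with x hx
      field_simp
    have ha : Tendsto (fun x : ℝ => 1 / lam x / x - (1/4) / x + 1/4) atTop (𝓝 (L - 0 + 1/4)) :=
      (hl.sub (tendsto_id.const_div_atTop (1/4))).add_const _
    have hb : Tendsto (fun x : ℝ => 1 / lam x / x + 1/4 + 20 * (Real.log (x + 1) / x)) atTop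
        (𝓝 (L + 1/4 + 20 * 0)) :=
      (hl.add_const _).add (hlog.const_mul 20)
    simp only [mul_zero, sub_zero, add_zero] at ha hb
    refine tendsto_of_tendsto_of_tendsto_of_le_of_le' ha hb ?_ ?_
    · filter_upwards [h, eventually_gt_atTop 0] with x hx hx0
      have := div_le_div_of_nonneg_right (hrq x hx).2.2.2.1 hx0.le
      refine le_trans (le_of_eq ?_) this
      field_simp
    · filter_upwards [h, eventually_gt_atTop 0] with x hx hx0
      have := div_le_div_of_nonneg_right (hrq x hx).2.2.2.2 hx0.le
      refine le_trans this (le_of_eq ?_)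
      rw [add_div, add_div, div_right_comm x 4 x, div_self hx0.ne', mul_div_assoc]
  refine ((hr.div hq (by positivity)).neg).congr' ?_
  filter_upwards [h, eventually_gt_atTop 0] with x hx hx0
  rw [(hrq x hx).1]
  simp only [Pi.div_apply]
  rw [div_div_eq_mul_div]
  ring

/-- Phase 3 asymptotics: for fixed `λ ∈ (0,1)`, `x · g_λ(x) → -2` as `x → ∞`;
and for fixed `μ > 0`, `x · g_{μ/x}(x) → -2μ/(μ+4)` as `x → ∞`. -/
theorem gLambda_phase_three (g : ℝ → ℝ → ℝ)
    (hg : ∀ lam ∈ Set.Ico (0 : ℝ) 2, IsGSol lam (g lam)) :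
    (∀ lam ∈ Set.Ioo (0 : ℝ) 1,
      Filter.Tendsto (fun x => x * g lam x) Filter.atTop (nhds (-2))) ∧
    (∀ μ : ℝ, 0 < μ →
      Filter.Tendsto (fun x => x * g (μ / x) x) Filter.atTop
        (nhds (-(2 * μ) / (μ + 4)))) := by
  constructor
  · intro lam hlam
    have := lim_aux (fun _ => lam) (g lam) 0 le_rfl (tendsto_id.const_div_atTop _) (by
      filter_upwards [eventually_ge_atTop 0] with x hx
      exact sol_bounds lam hlam.1 hlam.2 _ (hg lam ⟨hlam.1.le, by linarith [hlam.2]⟩) x hx)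
    convert this using 2
    norm_num
  · intro μ hμ
    have := lim_aux (fun x => μ / x) (fun x => g (μ / x) x) (1 / μ) (by positivity)
      (by
        refine tendsto_const_nhds.congr' ?_
        filter_upwards [eventually_gt_atTop 0] with x hx
        field_simp) (by
      filter_upwards [eventually_gt_atTop 0, eventually_gt_atTop μ] with x hx hx1
      have h1 : μ / x < 1 := (div_lt_one hx).2 hx1
      have h0 : 0 < μ / x := by positivity
      exact sol_bounds (μ / x) h0 h1 _ (hg _ ⟨h0.le, by linarith⟩) x hx.le)
    convert this using 2
    field_simp
    ring
end

section
/- Let 0 < λ₁ < λ₂ ≤ λ_* < 1. Then for every x ≥ 0 one has g_{λ₂}(x) − g_{λ₁}(x) ≤ −((λ₂ − λ₁) / (2 √(1−λ_*))) · ( e^{−(1−√(1−λ_*)) x} − e^{−(1+√(1−λ_*)) x} ). In particular g_{λ₂}(x) < g_{λ₁}(x) for every x > 0, i.e. the solutions for distinct parameters in (0,1) never intersect away from the origin. -/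
open Set Filter

/-- A function on `[0,∞)` with nonnegative derivative lies above its value at earlier points. -/
lemma mono_aux_s7 (f f' : ℝ → ℝ)
    (hf : ∀ x ∈ Set.Ici (0 : ℝ), HasDerivWithinAt f (f' x) (Set.Ici 0) x)
    (hn : ∀ x ∈ Set.Ici (0 : ℝ), 0 ≤ f' x) {a b : ℝ} (ha : 0 ≤ a) (hab : a ≤ b) :
    f a ≤ f b := by
  have hm : MonotoneOn f (Set.Ici 0) := by
    refine monotoneOn_of_hasDerivWithinAt_nonneg (f' := f') (convex_Ici 0)
      (fun x hx => (hf x hx).continuousWithinAt) ?_ ?_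
    · intro x hx
      exact (hf x (interior_subset hx)).mono interior_subset
    · intro x hx
      exact hn x (interior_subset hx)
  exact hm ha (le_trans ha hab) hab

lemma exp_aux (c x : ℝ) :
    HasDerivWithinAt (fun x : ℝ => Real.exp (c * x)) (Real.exp (c * x) * c) (Set.Ici 0) x := by
  have h := ((hasDerivAt_id x).const_mul c).exp
  simpa using h.hasDerivWithinAt

lemma IsGSol.hd {l : ℝ} {g : ℝ → ℝ} (h : IsGSol l g) :
    ∀ x ∈ Set.Ici (0 : ℝ), HasDerivWithinAt g (derIci g x) (Set.Ici 0) x :=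
  fun x hx => (h.1 x hx).hasDerivWithinAt

lemma IsGSol.hd2 {l : ℝ} {g : ℝ → ℝ} (h : IsGSol l g) :
    ∀ x ∈ Set.Ici (0 : ℝ),
      HasDerivWithinAt (derIci g) (g x ^ 2 - 2 * derIci g x) (Set.Ici 0) x := by
  intro x hx
  have h1 := (h.2.1 x hx).hasDerivWithinAt
  have h2 := h.2.2.1 x hx
  have h3 : g x ^ 2 - 2 * derIci g x = derivWithin (derIci g) (Set.Ici 0) x := by
    unfold derIci2 at h2
    linarith
  rw [h3]
  exact h1

lemma IsGSol.lower {l : ℝ} {g : ℝ → ℝ} (hl : 0 < l) (h : IsGSol l g) :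
    ∀ x ∈ Set.Ici (0 : ℝ), -(l / 2) ≤ g x := by
  have hA : ∀ x ∈ Set.Ici (0 : ℝ), -l ≤ derIci g x + 2 * g x := by
    intro x hx
    have := mono_aux_s7 (fun x => derIci g x + 2 * g x) (fun x => g x ^ 2)
      (fun y hy => ((h.hd2 y hy).add ((h.hd y hy).const_mul 2)).congr_deriv (by ring))
      (fun y _ => sq_nonneg _) le_rfl hx
    simp only [h.2.2.2.1, h.2.2.2.2] at this
    linarith
  intro x hx
  have h3 := mono_aux_s7 (fun x => Real.exp (2 * x) * (g x + l / 2))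
    (fun x => Real.exp (2 * x) * (derIci g x + 2 * g x + l))
    (fun y hy => ((exp_aux 2 y).mul ((h.hd y hy).add_const (l / 2))).congr_deriv (by ring))
    (fun y hy => mul_nonneg (Real.exp_pos _).le (by linarith [hA y hy])) le_rfl hx
  simp only [h.2.2.2.1, mul_zero, Real.exp_zero] at h3
  have h4 : 0 < Real.exp (2 * x) * (g x + l / 2) := by linarith
  have := pos_of_mul_pos_right h4 (Real.exp_pos _).le
  linarith

/-- Strict monotonicity in `λ`: for `0 < λ₁ < λ₂ ≤ λ⋆ < 1`, the quantitative
separation bound holds, and in particular `g_{λ₂}(x) < g_{λ₁}(x)` for every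
`x > 0`. -/
theorem gLambda_strict_comparison (lam1 lam2 lamstar : ℝ)
    (h0 : 0 < lam1) (h12 : lam1 < lam2) (h2s : lam2 ≤ lamstar) (hs : lamstar < 1)
    (g1 g2 : ℝ → ℝ) (hg1 : IsGSol lam1 g1) (hg2 : IsGSol lam2 g2) :
    (∀ x ∈ Set.Ici (0 : ℝ),
      g2 x - g1 x ≤ -((lam2 - lam1) / (2 * Real.sqrt (1 - lamstar))) *
        (Real.exp (-(1 - Real.sqrt (1 - lamstar)) * x)
          - Real.exp (-(1 + Real.sqrt (1 - lamstar)) * x))) ∧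
    ∀ x : ℝ, 0 < x → g2 x < g1 x := by
  set δ := lam2 - lam1 with hδ
  have hδp : 0 < δ := by rw [hδ]; linarith
  set s := Real.sqrt (1 - lamstar) with hsd
  have hsp : 0 < s := Real.sqrt_pos.2 (by linarith)
  have hss : s ^ 2 = 1 - lamstar := Real.sq_sqrt (by linarith)
  have hq : ∀ x ∈ Set.Ici (0 : ℝ), 0 ≤ g1 x + g2 x + lamstar := by
    intro x hx
    linarith [hg1.lower h0 x hx, hg2.lower (h0.trans h12) x hx]
  obtain ⟨D, hD⟩ : ∃ D : ℝ → ℝ, D = fun x => g1 x - g2 x := ⟨_, rfl⟩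
  obtain ⟨E, hE⟩ : ∃ E : ℝ → ℝ, E = fun x => derIci g1 x - derIci g2 x := ⟨_, rfl⟩
  have hD0 : D 0 = 0 := by simp [hD, hg1.2.2.2.1, hg2.2.2.2.1]
  have hE0 : E 0 = δ := by simp only [hE, hg1.2.2.2.2, hg2.2.2.2.2, hδ]; ring
  have dD : ∀ x ∈ Set.Ici (0 : ℝ), HasDerivWithinAt D (E x) (Set.Ici 0) x := by
    intro x hx
    rw [hD, hE]
    exact (hg1.hd x hx).sub (hg2.hd x hx)
  have dE : ∀ x ∈ Set.Ici (0 : ℝ),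
      HasDerivWithinAt E ((g1 x + g2 x) * D x - 2 * E x) (Set.Ici 0) x := by
    intro x hx
    have := (hg1.hd2 x hx).sub (hg2.hd2 x hx)
    rw [hD, hE]
    exact this.congr_deriv (by ring)
  -- the energy argument: `exp (2 x) D (D + E)` is nondecreasing, hence nonnegative
  have hW : ∀ x ∈ Set.Ici (0 : ℝ), 0 ≤ D x * (D x + E x) := by
    intro x hx
    have h3 := mono_aux_s7 (fun x => Real.exp (2 * x) * (D x * (D x + E x)))
      (fun x => Real.exp (2 * x) * ((D x + E x) ^ 2 + (1 + g1 x + g2 x) * D x ^ 2))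
      (fun y hy => ((exp_aux 2 y).mul ((dD y hy).mul ((dD y hy).add (dE y hy)))).congr_deriv
        (by simp only [Pi.add_apply, Pi.mul_apply]; ring))
      (fun y hy => mul_nonneg (Real.exp_pos _).le (add_nonneg (sq_nonneg _)
        (mul_nonneg (by linarith [hq y hy]) (sq_nonneg _)))) le_rfl hx
    simp only [hD0, mul_zero, zero_mul] at h3
    exact nonneg_of_mul_nonneg_right h3 (Real.exp_pos _)
  have hsq : ∀ a b : ℝ, 0 ≤ a → a ≤ b →
      Real.exp (2 * a) * D a ^ 2 ≤ Real.exp (2 * b) * D b ^ 2 := by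
    intro a b ha hab
    exact mono_aux_s7 (fun x => Real.exp (2 * x) * D x ^ 2)
      (fun x => Real.exp (2 * x) * (2 * (D x * (D x + E x))))
      (fun y hy => ((exp_aux 2 y).mul ((dD y hy).pow 2)).congr_deriv
        (by simp only [Pi.pow_apply]; push_cast; ring))
      (fun y hy => mul_nonneg (Real.exp_pos _).le (by linarith [hW y hy])) ha hab
  have hpos : ∀ x : ℝ, 0 < x → 0 < D x := by
    intro x hx
    by_contra hcon
    have hcon : D x ≤ 0 := not_lt.1 hcon
    have hy : ∃ y, 0 < y ∧ y < x ∧ 0 < D y := by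
      have h1 := (dD 0 Set.self_mem_Ici).mono (Set.Ioi_subset_Ici_self)
      rw [hE0, hasDerivWithinAt_iff_tendsto_slope' (by simp)] at h1
      have h2 := h1.eventually (lt_mem_nhds hδp)
      have h3 : ∀ᶠ y in nhdsWithin (0 : ℝ) (Set.Ioi 0), y ∈ Set.Ioo 0 x :=
        Ioo_mem_nhdsGT hx
      obtain ⟨y, h4, h5⟩ := (h2.and h3).exists
      refine ⟨y, h5.1, h5.2, ?_⟩
      rw [slope_def_field, hD0, sub_zero, sub_zero] at h4
      have := mul_pos h4 h5.1
      rwa [div_mul_cancel₀ _ h5.1.ne'] at this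
    obtain ⟨y, hy0, hyx, hDy⟩ := hy
    have hc : ContinuousOn D (Set.Icc y x) := fun z hz =>
      ((dD z (hy0.le.trans hz.1)).continuousWithinAt).mono
        (fun w hw => hy0.le.trans hw.1)
    obtain ⟨z, hz, hz0⟩ := intermediate_value_Icc' hyx.le hc ⟨hcon, hDy.le⟩
    have h6 := hsq y z hy0.le hz.1
    rw [hz0] at h6
    have : 0 < Real.exp (2 * y) * D y ^ 2 := by positivity
    norm_num at h6
    linarith
  have hnn : ∀ x ∈ Set.Ici (0 : ℝ), 0 ≤ D x := by
    intro x hx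
    rcases eq_or_lt_of_le (show (0 : ℝ) ≤ x from hx) with h | h
    · rw [← h, hD0]
    · exact (hpos x h).le
  refine ⟨?_, fun x hx => ?_⟩
  · have hP : ∀ x ∈ Set.Ici (0 : ℝ), δ ≤ Real.exp ((1 - s) * x) * (E x + (1 + s) * D x) := by
      intro x hx
      have h3 := mono_aux_s7 (fun x => Real.exp ((1 - s) * x) * (E x + (1 + s) * D x))
        (fun x => Real.exp ((1 - s) * x) * ((g1 x + g2 x + lamstar) * D x))
        (fun y hy => ((exp_aux (1 - s) y).mul
          ((dE y hy).add ((dD y hy).const_mul (1 + s)))).congr_deriv (by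
            have : lamstar = 1 - s ^ 2 := by linarith
            simp only [Pi.add_apply]
            rw [this]; ring))
        (fun y hy => mul_nonneg (Real.exp_pos _).le (mul_nonneg (hq y hy) (hnn y hy)))
        le_rfl hx
      simpa [hD0, hE0] using h3
    intro x hx
    have h3 := mono_aux_s7
      (fun x => Real.exp ((1 + s) * x) * D x - δ / (2 * s) * Real.exp ((2 * s) * x))
      (fun x => Real.exp ((1 + s) * x) * (E x + (1 + s) * D x) - δ * Real.exp ((2 * s) * x))
      (fun y hy => (((exp_aux (1 + s) y).mul (dD y hy)).sub
        ((exp_aux (2 * s) y).const_mul (δ / (2 * s)))).congr_deriv (by field_simp; ring))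
      (fun y hy => by
        have h4 : Real.exp ((1 + s) * y) = Real.exp ((2 * s) * y) * Real.exp ((1 - s) * y) := by
          rw [← Real.exp_add]; congr 1; ring
        have h5 := mul_le_mul_of_nonneg_left (hP y hy) (Real.exp_pos ((2 * s) * y)).le
        rw [h4]
        linarith)
      le_rfl hx
    simp only [hD0, mul_zero, Real.exp_zero] at h3
    have h6 := mul_le_mul_of_nonneg_left h3 (Real.exp_pos (-(1 + s) * x)).le
    have h7 : Real.exp (-(1 + s) * x) * Real.exp ((1 + s) * x) = 1 := by
      rw [← Real.exp_add, ← Real.exp_zero]; congr 1; ring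
    have h8 : Real.exp (-(1 - s) * x) = Real.exp (-(1 + s) * x) * Real.exp ((2 * s) * x) := by
      rw [← Real.exp_add]; congr 1; ring
    have h9 : g2 x - g1 x = -D x := by rw [hD]; ring
    rw [h9, h8]
    have h10 : D x = Real.exp (-(1 + s) * x) * Real.exp ((1 + s) * x) * D x := by
      rw [h7, one_mul]
    linarith
  · have := hpos x hx
    rw [hD] at this
    simpa using this
end

section
/- Let R > 1 and s < 0. Suppose v₁, v₂ : [1,R] → ℝ are continuous, twice differentiable on (1,R), satisfy v_i''(r) + (3/r) v_i'(r) = v_i(r)² for all r ∈ (1,R), v_i(1) = s, v_i(R) = 0, and each v_i has a (one-sided) derivative at R with |v_i'(R)| < R^{−3}. Then v₁ = v₂ on [1,R]. -/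
open Set

/-- `v` is a continuous solution on `[1,R]`, twice differentiable on `(1,R)`,
of the radial (dimension 4) equation `v'' + (3/r) v' = v²` with boundary
values `v(1) = s` and `v(R) = 0`. -/
def IsRadialSol4 (R s : ℝ) (v : ℝ → ℝ) : Prop :=
  ContinuousOn v (Set.Icc 1 R) ∧
  (∀ r ∈ Set.Ioo (1 : ℝ) R, DifferentiableAt ℝ v r) ∧
  (∀ r ∈ Set.Ioo (1 : ℝ) R, DifferentiableAt ℝ (deriv v) r) ∧
  (∀ r ∈ Set.Ioo (1 : ℝ) R, deriv (deriv v) r + 3 / r * deriv v r = (v r) ^ 2) ∧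
  v 1 = s ∧ v R = 0


/-- The flux `r³ v'` is monotone on `(1,R)`. -/
lemma radial_flux_mono {R s : ℝ} {v : ℝ → ℝ} (h : IsRadialSol4 R s v) :
    MonotoneOn (fun r => r ^ 3 * deriv v r) (Ioo 1 R) := by
  obtain ⟨-, -, hd2, he, -, -⟩ := h
  have key : ∀ r ∈ Ioo (1 : ℝ) R,
      HasDerivAt (fun r => r ^ 3 * deriv v r) (r ^ 3 * (v r) ^ 2) r := by
    intro r hr
    have h0 : r ≠ 0 := by have := hr.1; intro h; linarith
    have h1 := (hasDerivAt_pow 3 r).mul (hd2 r hr).hasDerivAt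
    refine h1.congr_deriv ?_
    rw [← he r hr]
    field_simp
    norm_num
    ring
  apply monotoneOn_of_deriv_nonneg (convex_Ioo 1 R)
  · exact fun r hr => (key r hr).continuousAt.continuousWithinAt
  · rw [interior_Ioo]
    exact fun r hr => (key r hr).differentiableAt.differentiableWithinAt
  · rw [interior_Ioo]
    intro r hr
    rw [(key r hr).deriv]
    have : 0 < r := by linarith [hr.1]
    positivity

/-- Lower bound for the solution. -/
lemma radial_lower {R s D : ℝ} {v : ℝ → ℝ} (hR : 1 < R) (h : IsRadialSol4 R s v)
    (hD : HasDerivWithinAt v D (Icc 1 R) R) (hD' : |D| < R ^ (-3 : ℝ)) :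
    ∀ r ∈ Ioo (1 : ℝ) R, 0 ≤ v r + 1 / (2 * r ^ 2) := by
  have hm := radial_flux_mono h
  obtain ⟨hc, hd, -, -, -, hvR⟩ := h
  have hR0 : 0 < R := by linarith
  have hDlt : D < 1 / R ^ 3 := by
    have e : R ^ (-3 : ℝ) = 1 / R ^ 3 := by
      rw [Real.rpow_neg hR0.le, one_div]; norm_cast
    rw [← e]; exact (le_abs_self D).trans_lt hD'
  have hq : ∀ r : ℝ, 0 < r → HasDerivAt (fun r : ℝ => 1 / (2 * r ^ 2)) (-(1 / r ^ 3)) r := by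
    intro r hr
    have h1 := ((hasDerivAt_pow 2 r).const_mul 2).inv (by positivity)
    simp only [one_div]
    refine h1.congr_deriv ?_
    field_simp
    norm_num
    try ring
  have hh : ∀ r ∈ Ioo (1 : ℝ) R,
      HasDerivAt (fun r => v r + 1 / (2 * r ^ 2)) (deriv v r - 1 / r ^ 3) r := by
    intro r hr
    exact ((hd r hr).hasDerivAt.add (hq r (by linarith [hr.1])))
  have hcont : ContinuousOn (fun r => v r + 1 / (2 * r ^ 2)) (Icc 1 R) := by
    apply hc.add
    exact fun r hr => (hq r (by linarith [hr.1])).continuousAt.continuousWithinAt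
  -- flux bound
  have hflux : ∀ r ∈ Ioo (1 : ℝ) R, r ^ 3 * deriv v r ≤ 1 := by
    intro a ha
    by_contra! hlt
    have hsub : Icc a R ⊆ Icc 1 R := Icc_subset_Icc_left ha.1.le
    have hmono : MonotoneOn (fun r => v r + 1 / (2 * r ^ 2)) (Icc a R) := by
      apply monotoneOn_of_deriv_nonneg (convex_Icc a R) (hcont.mono hsub)
      · rw [interior_Icc]
        exact fun r hr =>
          (hh r ⟨ha.1.trans hr.1, hr.2⟩).differentiableAt.differentiableWithinAt
      · rw [interior_Icc]
        intro r hr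
        have hr' : r ∈ Ioo (1 : ℝ) R := ⟨ha.1.trans hr.1, hr.2⟩
        rw [(hh r hr').deriv]
        have h1 : 1 < r ^ 3 * deriv v r := hlt.trans_le (hm ha hr' hr.1.le)
        have : 0 < r := by linarith [hr'.1]
        rw [sub_nonneg, div_le_iff₀ (by positivity)]
        linarith
    have hd1 : HasDerivWithinAt (fun r => v r + 1 / (2 * r ^ 2)) (D - 1 / R ^ 3) (Icc a R) R :=
      (hD.add (hq R hR0).hasDerivWithinAt).mono hsub
    have hle : 0 ≤ D - 1 / R ^ 3 := by
      have := hmono.derivWithin_nonneg (x := R)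
      rwa [hd1.derivWithin (uniqueDiffOn_Icc ha.2 R (right_mem_Icc.2 ha.2.le))] at this
    linarith
  have hanti : AntitoneOn (fun r => v r + 1 / (2 * r ^ 2)) (Icc 1 R) := by
    apply antitoneOn_of_deriv_nonpos (convex_Icc 1 R) hcont
    · rw [interior_Icc]
      exact fun r hr => (hh r hr).differentiableAt.differentiableWithinAt
    · rw [interior_Icc]
      intro r hr
      rw [(hh r hr).deriv]
      have : 0 < r := by linarith [hr.1]
      rw [sub_nonpos, le_div_iff₀ (by positivity)]
      linarith [hflux r hr]
  intro r hr
  have h1 := hanti (Ioo_subset_Icc_self hr) (right_mem_Icc.2 hR.le) hr.2.le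
  simp only [hvR, zero_add] at h1
  exact le_trans (by positivity) h1

theorem radial_uniqueness_dim4 (R s : ℝ) (hR : 1 < R) (hs : s < 0)
    (v₁ v₂ : ℝ → ℝ) (h₁ : IsRadialSol4 R s v₁) (h₂ : IsRadialSol4 R s v₂)
    (D₁ D₂ : ℝ)
    (hD₁ : HasDerivWithinAt v₁ D₁ (Set.Icc 1 R) R)
    (hD₁' : |D₁| < R ^ (-3 : ℝ))
    (hD₂ : HasDerivWithinAt v₂ D₂ (Set.Icc 1 R) R)
    (hD₂' : |D₂| < R ^ (-3 : ℝ)) :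
    Set.EqOn v₁ v₂ (Set.Icc 1 R) := by
  have lb₁ := radial_lower hR h₁ hD₁ hD₁'
  have lb₂ := radial_lower hR h₂ hD₂ hD₂'
  obtain ⟨c₁, d₁, dd₁, e₁, a₁, b₁⟩ := h₁
  obtain ⟨c₂, d₂, dd₂, e₂, a₂, b₂⟩ := h₂
  -- derivative of `(r w)²`
  have hF : ∀ r ∈ Ioo (1 : ℝ) R, HasDerivAt (fun r => (r * (v₁ r - v₂ r)) ^ 2)
      (2 * (r * (v₁ r - v₂ r)) * (v₁ r - v₂ r + r * (deriv v₁ r - deriv v₂ r))) r := by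
    intro r hr
    have h := ((hasDerivAt_id r).mul ((d₁ r hr).hasDerivAt.sub (d₂ r hr).hasDerivAt)).pow 2
    refine h.congr_deriv ?_
    simp
  have hG : ∀ r ∈ Ioo (1 : ℝ) R, HasDerivAt
      (fun r => (r * (v₁ r - v₂ r)) * (r * (v₁ r - v₂ r + r * (deriv v₁ r - deriv v₂ r))))
      (r * (v₁ r - v₂ r + r * (deriv v₁ r - deriv v₂ r)) ^ 2
        + r * (v₁ r - v₂ r) ^ 2 * (1 + r ^ 2 * (v₁ r + v₂ r))) r := by
    intro r hr
    have h0 : r ≠ 0 := by have := hr.1; intro h; linarith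
    have hw := (d₁ r hr).hasDerivAt.sub (d₂ r hr).hasDerivAt
    have hw' := (dd₁ r hr).hasDerivAt.sub (dd₂ r hr).hasDerivAt
    have hi := hasDerivAt_id r
    have h := (hi.mul hw).mul (hi.mul (hw.add (hi.mul hw')))
    refine h.congr_deriv ?_
    have E₁ : deriv (deriv v₁) r = v₁ r ^ 2 - 3 / r * deriv v₁ r := by linarith [e₁ r hr]
    have E₂ : deriv (deriv v₂) r = v₂ r ^ 2 - 3 / r * deriv v₂ r := by linarith [e₂ r hr]
    simp [E₁, E₂]
    field_simp
    ring
  have hmono : MonotoneOn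
      (fun r => (r * (v₁ r - v₂ r)) * (r * (v₁ r - v₂ r + r * (deriv v₁ r - deriv v₂ r))))
      (Ioo 1 R) := by
    apply monotoneOn_of_deriv_nonneg (convex_Ioo 1 R)
    · exact fun r hr => (hG r hr).continuousAt.continuousWithinAt
    · rw [interior_Ioo]
      exact fun r hr => (hG r hr).differentiableAt.differentiableWithinAt
    · rw [interior_Ioo]
      intro r hr
      rw [(hG r hr).deriv]
      have hr0 : 0 < r := by linarith [hr.1]
      have hp : 0 ≤ 1 + r ^ 2 * (v₁ r + v₂ r) := by
        have := mul_nonneg (sq_nonneg r) (add_nonneg (lb₁ r hr) (lb₂ r hr))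
        have e : r ^ 2 * (v₁ r + 1 / (2 * r ^ 2) + (v₂ r + 1 / (2 * r ^ 2)))
            = 1 + r ^ 2 * (v₁ r + v₂ r) := by
          field_simp
          ring
        rwa [e] at this
      positivity
  have hcont : ContinuousOn (fun r => (r * (v₁ r - v₂ r)) ^ 2) (Icc 1 R) :=
    (continuousOn_id.mul (c₁.sub c₂)).pow 2
  intro c hc
  by_contra hne
  have hc1 : 1 < c := lt_of_le_of_ne hc.1 (by rintro rfl; exact hne (a₁.trans a₂.symm))
  have hcR : c < R := lt_of_le_of_ne hc.2 (by rintro rfl; exact hne (b₁.trans b₂.symm))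
  have hpos : 0 < (c * (v₁ c - v₂ c)) ^ 2 := by
    have h1 : v₁ c - v₂ c ≠ 0 := sub_ne_zero.2 hne
    have h2 : c ≠ 0 := by intro h; linarith
    positivity
  obtain ⟨x, hx, hxe⟩ := exists_hasDerivAt_eq_slope _ _ hc1
    (hcont.mono (Icc_subset_Icc_right hcR.le)) (fun r hr => hF r ⟨hr.1, hr.2.trans hcR⟩)
  obtain ⟨y, hy, hye⟩ := exists_hasDerivAt_eq_slope _ _ hcR
    (hcont.mono (Icc_subset_Icc_left hc1.le)) (fun r hr => hF r ⟨hc1.trans hr.1, hr.2⟩)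
  simp only [a₁, a₂, sub_self, mul_zero] at hxe
  simp only [b₁, b₂, sub_self, mul_zero] at hye
  have hx1 : 0 < (c * (v₁ c - v₂ c)) ^ 2 / (c - 1) := div_pos hpos (by linarith)
  have hy1 : 0 < (c * (v₁ c - v₂ c)) ^ 2 / (R - c) := div_pos hpos (by linarith)
  have hx2 : (0 : ℝ) < 2 * (x * (v₁ x - v₂ x)) *
      (v₁ x - v₂ x + x * (deriv v₁ x - deriv v₂ x)) := by
    rw [hxe]; simpa using hx1
  have hy2 : 2 * (y * (v₁ y - v₂ y)) *
      (v₁ y - v₂ y + y * (deriv v₁ y - deriv v₂ y)) < 0 := by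
    rw [hye]
    apply div_neg_of_neg_of_pos _ (by linarith)
    simpa using hpos
  have hxy := hmono ⟨hx.1, hx.2.trans hcR⟩ ⟨hc1.trans hy.1, hy.2⟩ (hx.2.trans hy.1).le
  have hx0 : 0 < x := by linarith [hx.1]
  have hy0 : 0 < y := by linarith [hy.1]
  have k1 := mul_pos hx0 hx2
  have k2 := mul_neg_of_pos_of_neg hy0 hy2
  simp only at hxy
  linarith
end

section
/- Let h : [0,∞) → ℝ be infinitely differentiable with h''(x) − 2 h'(x) = h(x)² for all x ≥ 0, and suppose h is not identically zero. Then: (1) h(x) > 0 for all x ≥ 0; (2) h(x) → 0 as x → ∞; (3) h is totally monotone, i.e. (−1)ⁿ h⁽ⁿ⁾(x) > 0 for every n ≥ 1 and every x ≥ 0; (4) h⁽ⁿ⁾(x) → 0 as x → ∞ for every n ≥ 1. -/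
open Set Filter

lemma aux_mono {f f' : ℝ → ℝ} (hf : ∀ x, 0 ≤ x → HasDerivWithinAt f (f' x) (Set.Ici 0) x)
    {b c : ℝ} (hb : 0 ≤ b) (hc : ∀ x, b ≤ x → c ≤ f' x) :
    ∀ x, b ≤ x → f b + c * (x - b) ≤ f x := by
  intro x hx
  have hm : MonotoneOn (fun y => f y - c * y) (Set.Ici b) := by
    apply monotoneOn_of_hasDerivWithinAt_nonneg (f' := fun y => f' y - c * 1) (convex_Ici b)
    · intro y hy
      have hy0 : (0:ℝ) ≤ y := hb.trans hy
      exact (((hf y hy0).sub ((hasDerivWithinAt_id y _).const_mul c)).continuousWithinAt).mono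
        (Set.Ici_subset_Ici.2 hb)
    · intro y hy
      rw [interior_Ici] at hy ⊢
      have hy0 : (0:ℝ) ≤ y := hb.trans (le_of_lt hy)
      exact ((hf y hy0).sub ((hasDerivWithinAt_id y _).const_mul c)).mono
        (fun z hz => hb.trans (le_of_lt hz))
    · intro y hy
      rw [interior_Ici] at hy
      have := hc y (le_of_lt hy)
      linarith
  have := hm (Set.mem_Ici.2 le_rfl) hx hx
  try simp only at this
  linarith

lemma aux_exp {K K' : ℝ → ℝ} (r : ℝ)
    (hK : ∀ x, 0 ≤ x → HasDerivWithinAt K (K' x) (Set.Ici 0) x)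
    {b : ℝ} (hb : 0 ≤ b) (h : ∀ x, b ≤ x → r * K x ≤ K' x) :
    ∀ x, b ≤ x → Real.exp (-r * b) * K b ≤ Real.exp (-r * x) * K x := by
  intro x hx
  have := aux_mono (f := fun x => Real.exp (-r * x) * K x)
    (f' := fun x => Real.exp (-r * x) * (-r * 1) * K x + Real.exp (-r * x) * K' x)
    (c := 0) (fun x hx => by
      exact ((((hasDerivWithinAt_id x _).const_mul (-r)).exp).mul (hK x hx))) hb (fun x hx => by
        have h1 := h x hx
        have h2 := Real.exp_pos (-r * x)
        nlinarith) x hx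
  simpa using this

/-- The key lemma. -/
lemma aux_key {F G H : ℝ → ℝ} {b d B : ℝ} (hb : 0 ≤ b)
    (hF : ∀ x, 0 ≤ x → HasDerivWithinAt F (G x) (Set.Ici 0) x)
    (hG : ∀ x, 0 ≤ x → HasDerivWithinAt G (H x) (Set.Ici 0) x)
    (hH : ∀ x, b ≤ x → 2 * G x - d ≤ H x) (hB : ∀ x, b ≤ x → F x ≤ B) : G b ≤ d / 2 := by
  by_contra hcon
  push Not at hcon
  set k := G b - d / 2 with hk
  have hk0 : 0 < k := by linarith
  have h1 : ∀ x, b ≤ x → k ≤ G x - d / 2 := by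
    intro x hx
    have := aux_exp (K := fun x => G x - d / 2) (K' := H) 2
      (fun x hx => (hG x hx).sub_const _) hb (fun x hx => by have := hH x hx; linarith) x hx
    simp only [← hk] at this
    have h3 : Real.exp (-2 * x) ≤ Real.exp (-2 * b) := Real.exp_le_exp.2 (by linarith)
    have h4 := Real.exp_pos (-2 * x)
    by_contra hc
    push Not at hc
    nlinarith
  have h2 : ∀ x, b ≤ x → G b + (2 * k) * (x - b) ≤ G x :=
    aux_mono hG hb (fun x hx => by have := hH x hx; have := h1 x hx; linarith)
  set b' := b + |1 - G b| / (2 * k) with hb'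
  have hbb : b ≤ b' := by have : 0 ≤ |1 - G b| / (2 * k) := by positivity
                          linarith
  have h3 : ∀ x, b' ≤ x → 1 ≤ G x := by
    intro x hx
    have h4 := h2 x (hbb.trans hx)
    have h5 : |1 - G b| ≤ 2 * k * (x - b) := by
      have : |1 - G b| / (2 * k) ≤ x - b := by linarith
      rwa [div_le_iff₀ (by positivity), mul_comm] at this
    have := le_abs_self (1 - G b)
    linarith
  have h6 := aux_mono hF (hb.trans hbb) h3 (b' + |B - F b'| + 1)
    (by have := abs_nonneg (B - F b'); linarith)
  have h7 := hB (b' + |B - F b'| + 1) (by have := abs_nonneg (B - F b'); linarith)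
  have := le_abs_self (B - F b')
  linarith

/-- No blow-up upward: the derivative is nonpositive. -/
lemma aux_noblow {F G : ℝ → ℝ}
    (hF : ∀ x, 0 ≤ x → HasDerivWithinAt F (G x) (Set.Ici 0) x)
    (hG : ∀ x, 0 ≤ x → HasDerivWithinAt G (2 * G x + F x ^ 2) (Set.Ici 0) x) :
    ∀ b, 0 ≤ b → G b ≤ 0 := by
  intro b hb
  by_contra hcon
  push Not at hcon
  have h1 : ∀ x, b ≤ x → G b ≤ G x := by
    intro x hx
    have := aux_exp (K := G) 2 hG hb (fun x hx => by nlinarith [sq_nonneg (F x)]) x hx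
    have h3 : Real.exp (-2 * x) ≤ Real.exp (-2 * b) := Real.exp_le_exp.2 (by linarith)
    have h4 := Real.exp_pos (-2 * x)
    by_contra hc
    push Not at hc
    nlinarith
  have h2 := aux_mono hF hb h1
  have hE : ∀ x, 0 ≤ x → HasDerivWithinAt (fun x => G x ^ 2 - 2 / 3 * F x ^ 3)
      (4 * G x ^ 2) (Set.Ici 0) x := by
    intro x hx
    have := ((hG x hx).pow 2).sub (((hF x hx).pow 3).const_mul (2 / 3))
    refine this.congr_deriv ?_
    norm_num
    ring
  have h3 := aux_mono hE hb (c := 4 * G b ^ 2) (fun x hx => by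
    have := h1 x hx
    nlinarith)
  obtain ⟨c, hc1, hc2, hc3⟩ : ∃ c, b ≤ c ∧ (∀ x, c ≤ x → 0 < F x) ∧
      (∀ x, c ≤ x → 2 / 3 * F x ^ 3 ≤ G x ^ 2) := by
    have t1 : Tendsto (fun x => F b + G b * (x - b)) atTop atTop :=
      tendsto_atTop_add_const_left _ _
        ((tendsto_atTop_add_const_right _ (-b) tendsto_id).const_mul_atTop hcon)
    have t2 : Tendsto (fun x => (G b ^ 2 - 2 / 3 * F b ^ 3) + (4 * G b ^ 2) * (x - b)) atTop atTop :=
      tendsto_atTop_add_const_left _ _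
        ((tendsto_atTop_add_const_right _ (-b) tendsto_id).const_mul_atTop (by positivity))
    have e := ((t1.eventually_gt_atTop 0).and ((t2.eventually_ge_atTop 0).and
      (eventually_ge_atTop b)))
    obtain ⟨c, hc⟩ := eventually_atTop.1 e
    refine ⟨c, (hc c le_rfl).2.2, fun x hx => ?_, fun x hx => ?_⟩
    · exact lt_of_lt_of_le (hc x hx).1 (h2 x (hc x hx).2.2)
    · have q1 := (hc x hx).2.1
      have q2 := h3 x (hc x hx).2.2
      try simp only at q2
      linarith
  have hc0 : 0 ≤ c := hb.trans hc1
  -- shift by c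
  have hs : ∀ x, 0 ≤ x → HasDerivWithinAt (fun y => F (c + y)) (G (c + x)) (Set.Ici 0) x := by
    intro x hx
    have := (hF (c + x) (by linarith)).scomp x (h := fun y => c + y) (s := Set.Ici 0)
      ((hasDerivWithinAt_id x _).const_add c)
      (fun y hy => by have : (0:ℝ) ≤ y := hy; show (0:ℝ) ≤ c + y; linarith)
    simpa using! this
  have hp : ∀ x, 0 ≤ x → HasDerivWithinAt (fun y => -(Real.sqrt (F (c + y)))⁻¹)
      (-(-(G (c + x) / (2 * Real.sqrt (F (c + x)))) / (Real.sqrt (F (c + x))) ^ 2)) (Set.Ici 0) x := by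
    intro x hx
    have hpos := hc2 (c + x) (by linarith)
    exact (((hs x hx).sqrt hpos.ne').inv (Real.sqrt_pos.2 hpos).ne').neg
  have h4 := aux_mono hp le_rfl (c := 1 / 4) (fun x hx => by
    have hpos := hc2 (c + x) (by linarith)
    have h5 := hc3 (c + x) (by linarith)
    have h6 := h1 (c + x) (by linarith)
    set s := Real.sqrt (F (c + x)) with hs
    have hs0 : 0 < s := Real.sqrt_pos.2 hpos
    have hsq : s ^ 2 = F (c + x) := Real.sq_sqrt hpos.le
    rw [← hsq] at h5
    have h7 : s ^ 3 / 2 ≤ G (c + x) := by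
      have : 0 < s ^ 6 := by positivity
      exact abs_le_of_sq_le_sq' (by nlinarith) (by linarith) |>.2
    rw [neg_div, neg_neg, div_div, div_le_div_iff₀ (by norm_num) (by positivity)]
    nlinarith)
  have hpos0 := hc2 (c + 0) (by linarith)
  set q := (Real.sqrt (F (c + 0)))⁻¹ with hq
  have hq0 : 0 < q := inv_pos.2 (Real.sqrt_pos.2 hpos0)
  have h8 := h4 (4 * q + 1) (by linarith)
  have h9 : 0 ≤ (Real.sqrt (F (c + (4 * q + 1))))⁻¹ := by positivity
  try simp only [← hq] at h8
  linarith

/-- No blow-up downward. -/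
lemma aux_nonneg {F G : ℝ → ℝ}
    (hF : ∀ x, 0 ≤ x → HasDerivWithinAt F (G x) (Set.Ici 0) x)
    (hG : ∀ x, 0 ≤ x → HasDerivWithinAt G (2 * G x + F x ^ 2) (Set.Ici 0) x)
    (hanti : ∀ x y, 0 ≤ x → x ≤ y → F y ≤ F x) :
    ∀ b, 0 ≤ b → 0 ≤ F b := by
  intro c hc0
  by_contra hcon
  push Not at hcon
  have hk : ∀ x, c ≤ x → G x ≤ -(F x ^ 2) / 2 := by
    intro x hx
    have hx0 := hc0.trans hx
    refine aux_key hx0 hF hG (B := F x) (fun y hy => ?_) (fun y hy => hanti _ _ hx0 hy)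
    have h1 := hanti _ _ hx0 hy
    have h2 := hanti _ _ hc0 hx
    nlinarith
  have hs : ∀ x, 0 ≤ x → HasDerivWithinAt (fun y => F (c + y)) (G (c + x)) (Set.Ici 0) x := by
    intro x hx
    have := (hF (c + x) (by linarith)).scomp x (h := fun y => c + y) (s := Set.Ici 0)
      ((hasDerivWithinAt_id x _).const_add c)
      (fun y hy => by have : (0:ℝ) ≤ y := hy; show (0:ℝ) ≤ c + y; linarith)
    simpa using! this
  have hneg : ∀ x, 0 ≤ x → F (c + x) < 0 := fun x hx =>
    lt_of_le_of_lt (hanti c (c + x) hc0 (by linarith)) hcon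
  have hp : ∀ x, 0 ≤ x → HasDerivWithinAt (fun y => (F (c + y))⁻¹)
      (-(G (c + x)) / (F (c + x)) ^ 2) (Set.Ici 0) x := by
    intro x hx
    exact (hs x hx).inv (hneg x hx).ne
  have h4 := aux_mono hp le_rfl (c := 1 / 2) (fun x hx => by
    have h1 := hneg x hx
    have h2 := hk (c + x) (by linarith)
    rw [div_le_div_iff₀ (by norm_num) (by have := h1.ne; positivity)]
    linarith)
  set q := (F (c + 0))⁻¹ with hq
  have hq0 : q < 0 := inv_lt_zero.2 (hneg 0 le_rfl)
  have h8 := h4 (-2 * q) (by linarith)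
  have h9 : (F (c + (-2 * q)))⁻¹ < 0 := inv_lt_zero.2 (hneg _ (by linarith))
  try simp only [← hq] at h8
  linarith

lemma aux_base {F G : ℝ → ℝ}
    (hF : ∀ x, 0 ≤ x → HasDerivWithinAt F (G x) (Set.Ici 0) x)
    (hG : ∀ x, 0 ≤ x → HasDerivWithinAt G (2 * G x + F x ^ 2) (Set.Ici 0) x)
    (hne : ∃ x, 0 ≤ x ∧ F x ≠ 0) :
    (∀ x, 0 ≤ x → 0 < F x) ∧ Tendsto F atTop (nhds 0) := by
  have hG0 := aux_noblow hF hG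
  have hanti : ∀ x y, 0 ≤ x → x ≤ y → F y ≤ F x := by
    intro x y hx hxy
    have := aux_mono (f := fun x => - F x) (f' := fun x => - G x) (c := 0)
      (fun x hx => (hF x hx).neg) hx (fun y hy => by have := hG0 y (hx.trans hy); linarith) y hxy
    try simp only at this
    linarith
  have hnn := aux_nonneg hF hG hanti
  have hpos : ∀ x, 0 ≤ x → 0 < F x := by
    intro c hc
    refine lt_of_le_of_ne (hnn c hc) (fun h0 => ?_)
    have hFz : ∀ x, c ≤ x → F x = 0 := fun x hx =>
      le_antisymm ((hanti c x hc hx).trans h0.symm.le) (hnn x (hc.trans hx))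
    have hGz : G (c + 1) = 0 := by
      refine le_antisymm (hG0 _ (by linarith)) ?_
      have := aux_key (F := fun x => - F x) (G := fun x => - G x)
        (H := fun x => - (2 * G x + F x ^ 2)) (b := c + 1) (d := 0) (B := 0) (by linarith)
        (fun x hx => (hF x hx).neg) (fun x hx => (hG x hx).neg)
        (fun x hx => by simp [hFz x (by linarith)]) (fun x hx => by simp [hFz x (by linarith)])
      try simp only at this
      linarith
    have hS : ∀ x, 0 ≤ x → HasDerivWithinAt (fun x => F x ^ 2 + G x ^ 2)
        (2 * F x * G x + 2 * G x * (2 * G x + F x ^ 2)) (Set.Ici 0) x := by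
      intro x hx
      have := ((hF x hx).pow 2).add ((hG x hx).pow 2)
      refine this.congr_deriv ?_
      norm_num
    have hzero : ∀ x, 0 ≤ x → F x = 0 := by
      intro x hx
      by_cases hxc : c ≤ x
      · exact hFz x hxc
      push Not at hxc
      have := aux_exp (-(1 + F 0)) hS hx (fun y hy => by
        have hy0 := hx.trans hy
        have h1 := hanti 0 y le_rfl hy0
        have h2 := hnn y hy0
        have h3 := hG0 y hy0
        have h4 : 0 ≤ (F y + G y) ^ 2 := sq_nonneg _
        have h5 : 0 ≤ F y * (F y + G y) ^ 2 := by positivity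
        have h6 : 0 ≤ (F 0 - F y) * (F y ^ 2 + G y ^ 2) :=
          mul_nonneg (by linarith) (by positivity)
        have h7 : 0 ≤ F y * (F y ^ 2 + G y ^ 2) := by positivity
        nlinarith [sq_nonneg (G y)]) (c + 1) (by linarith)
      simp only [hFz (c + 1) (by linarith), hGz] at this
      have he := Real.exp_pos (-(-(1 + F 0)) * x)
      have h8 : F x ^ 2 + G x ^ 2 ≤ 0 := by
        by_contra hc'
        push Not at hc'
        have := mul_pos he hc'
        norm_num at *
        linarith
      nlinarith [sq_nonneg (F x), sq_nonneg (G x)]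
    obtain ⟨x, hx, hx'⟩ := hne
    exact hx' (hzero x hx)
  refine ⟨hpos, ?_⟩
  -- eventually below any epsilon
  have hsmall : ∀ e, 0 < e → ∃ c, 0 ≤ c ∧ F c < e := by
    intro e he
    by_contra hcon
    push Not at hcon
    have h1 : ∀ x, 0 ≤ x → G x ≤ -(e ^ 2) / 2 := fun x hx =>
      aux_key hx hF hG (B := F x) (fun y hy => by
        have := hcon y (hx.trans hy); nlinarith) (fun y hy => hanti _ _ hx hy)
    have h2 := aux_mono (f := fun x => - F x) (f' := fun x => - G x) (c := e ^ 2 / 2)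
      (fun x hx => (hF x hx).neg) le_rfl (fun y hy => by have := h1 y hy; linarith)
      (F 0 / (e ^ 2 / 2)) (by have := hpos 0 le_rfl; positivity)
    have h3 := hpos (F 0 / (e ^ 2 / 2)) (by have := hpos 0 le_rfl; positivity)
    simp only [sub_zero] at h2
    rw [mul_div_cancel₀ _ (by positivity)] at h2
    linarith
  rw [Metric.tendsto_atTop]
  intro e he
  obtain ⟨c, hc, hce⟩ := hsmall e he
  refine ⟨c, fun x hx => ?_⟩
  rw [Real.dist_eq, sub_zero, abs_of_pos (hpos x (hc.trans hx))]
  exact lt_of_le_of_lt (hanti c x hc hx) hce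

lemma aux_step {F G Q : ℝ → ℝ}
    (hF : ∀ x, 0 ≤ x → HasDerivWithinAt F (G x) (Set.Ici 0) x)
    (hG : ∀ x, 0 ≤ x → HasDerivWithinAt G (2 * G x + Q x) (Set.Ici 0) x)
    (hQ : ∀ x, 0 ≤ x → 0 < Q x) (hQt : Tendsto Q atTop (nhds 0))
    (hFt : Tendsto F atTop (nhds 0)) :
    (∀ x, 0 ≤ x → G x < 0) ∧ Tendsto G atTop (nhds 0) := by
  obtain ⟨c, hc⟩ := eventually_atTop.1 ((Metric.tendsto_nhds.1 hFt 1 one_pos))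
  have hG0' : ∀ x, max c 0 ≤ x → G x ≤ 0 := by
    intro x hx
    have hx0 : 0 ≤ x := (le_max_right _ _).trans hx
    have := aux_key hx0 hF hG (d := 0) (B := 1) (fun y hy => by
      have := hQ y (hx0.trans hy); linarith) (fun y hy => by
      have := hc y ((le_max_left _ _).trans (hx.trans hy))
      rw [Real.dist_eq, sub_zero] at this
      exact (le_abs_self _).trans this.le)
    simpa using this
  have hG0 : ∀ x, 0 ≤ x → G x ≤ 0 := by
    intro x hx
    have h1 := aux_exp 2 hG hx (fun y hy => by have := hQ y (hx.trans hy); linarith)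
      (max x (max c 0)) (le_max_left _ _)
    have h2 := hG0' (max x (max c 0)) (le_max_right _ _)
    by_contra h
    push Not at h
    have := mul_pos (Real.exp_pos (-2 * x)) h
    have := mul_nonpos_of_nonneg_of_nonpos (Real.exp_pos (-2 * (max x (max c 0)))).le h2
    linarith
  constructor
  · intro x hx
    refine lt_of_le_of_ne (hG0 x hx) (fun h0 => ?_)
    have hd := hG x hx
    -- G is zero from x on, so its derivative vanishes
    have hz : ∀ y, x ≤ y → G y = 0 := by
      intro y hy
      refine le_antisymm (hG0 y (hx.trans hy)) ?_
      have h1 := aux_exp 2 hG hx (fun y hy => by have := hQ y (hx.trans hy); linarith) y hy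
      rw [h0, mul_zero] at h1
      exact nonneg_of_mul_nonneg_right h1 (Real.exp_pos _)
    have hd1 : HasDerivWithinAt G (2 * G x + Q x) (Set.Ici x) x :=
      hd.mono (Set.Ici_subset_Ici.2 hx)
    have hd2 : HasDerivWithinAt G 0 (Set.Ici x) x :=
      (hasDerivWithinAt_const x (Set.Ici x) (0:ℝ)).congr (fun y hy => hz y hy) h0
    have := (uniqueDiffOn_Ici x x (Set.mem_Ici.2 le_rfl)).eq_deriv _ hd1 hd2
    have := hQ x hx
    linarith
  · rw [Metric.tendsto_atTop]
    intro e he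
    obtain ⟨c', hc'⟩ := eventually_atTop.1 ((Metric.tendsto_nhds.1 hQt e he))
    refine ⟨max 0 (max c c'), fun x hx => ?_⟩
    have hx0 : 0 ≤ x := (le_max_left _ _).trans hx
    have hxc : c ≤ x := (le_max_left _ _).trans ((le_max_right _ _).trans hx)
    have hxc' : c' ≤ x := (le_max_right _ _).trans ((le_max_right _ _).trans hx)
    have := aux_key (F := fun x => - F x) (G := fun x => - G x)
        (H := fun x => - (2 * G x + Q x)) (b := x) (d := e) (B := 1) hx0
        (fun x hx => (hF x hx).neg) (fun x hx => (hG x hx).neg)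
        (fun y hy => by
          have := hc' y (hxc'.trans hy)
          rw [Real.dist_eq, sub_zero] at this
          have := (le_abs_self _).trans this.le
          try simp only
          linarith)
        (fun y hy => by
          have := hc y (hxc.trans hy)
          rw [Real.dist_eq, sub_zero] at this
          exact (neg_le_abs _).trans this.le)
    rw [Real.dist_eq, sub_zero, abs_of_nonpos (hG0 x hx0)]
    try simp only at this
    linarith


theorem hSol_totally_monotone (h : ℝ → ℝ)
    (hsmooth : ContDiffOn ℝ (⊤ : ℕ∞) h (Set.Ici 0))
    (hODE : ∀ x ∈ Set.Ici (0 : ℝ),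
      iteratedDerivWithin 2 h (Set.Ici 0) x - 2 * iteratedDerivWithin 1 h (Set.Ici 0) x
        = (h x) ^ 2)
    (hne : ∃ x ∈ Set.Ici (0 : ℝ), h x ≠ 0) :
    (∀ x ∈ Set.Ici (0 : ℝ), 0 < h x) ∧
    Filter.Tendsto h Filter.atTop (nhds 0) ∧
    (∀ n : ℕ, 1 ≤ n → ∀ x ∈ Set.Ici (0 : ℝ),
      0 < (-1 : ℝ) ^ n * iteratedDerivWithin n h (Set.Ici 0) x) ∧
    (∀ n : ℕ, 1 ≤ n →
      Filter.Tendsto (iteratedDerivWithin n h (Set.Ici 0)) Filter.atTop (nhds 0)) := by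
  have hud : UniqueDiffOn ℝ (Set.Ici (0:ℝ)) := uniqueDiffOn_Ici 0
  have hder : ∀ f : ℝ → ℝ, ContDiffOn ℝ (⊤ : ℕ∞) f (Set.Ici 0) → ∀ n : ℕ, ∀ x, 0 ≤ x →
      HasDerivWithinAt (iteratedDerivWithin n f (Set.Ici 0))
        (iteratedDerivWithin (n + 1) f (Set.Ici 0) x) (Set.Ici 0) x := by
    intro f hf n x hx
    have := hf.differentiableOn_iteratedDerivWithin (m := n)
      (by exact_mod_cast WithTop.coe_lt_top n) hud x hx
    rw [iteratedDerivWithin_succ]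
    exact this.hasDerivWithinAt
  have hu := hder h hsmooth
  have hq := hder (h * h) (hsmooth.mul hsmooth)
  have hrec : ∀ n : ℕ, ∀ x, 0 ≤ x → iteratedDerivWithin (n + 2) h (Set.Ici 0) x =
      2 * iteratedDerivWithin (n + 1) h (Set.Ici 0) x
        + iteratedDerivWithin n (h * h) (Set.Ici 0) x := by
    intro n
    induction n with
    | zero =>
      intro x hx
      have := hODE x hx
      simp only [iteratedDerivWithin_zero, Pi.mul_apply, zero_add]
      linarith
    | succ n ih =>
      intro x hx
      have h1 := hu (n + 2) x hx
      have h2 := ((hu (n + 1) x hx).const_mul 2).add (hq n x hx)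
      have h3 := h2.congr (f₁ := iteratedDerivWithin (n + 2) h (Set.Ici 0))
        (fun y hy => ih y hy) (ih x hx)
      exact (hud x hx).eq_deriv _ h1 h3
  have hleib : ∀ n : ℕ, ∀ x, 0 ≤ x → iteratedDerivWithin n (h * h) (Set.Ici 0) x =
      ∑ i ∈ Finset.range (n + 1), n.choose i * iteratedDerivWithin i h (Set.Ici 0) x
        * iteratedDerivWithin (n - i) h (Set.Ici 0) x := by
    intro n x hx
    have hc : ContDiffWithinAt ℝ n h (Set.Ici 0) x :=
      (hsmooth x hx).of_le (by exact_mod_cast le_top)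
    exact iteratedDerivWithin_mul hx hud hc hc
  have hbase := aux_base (F := h) (G := iteratedDerivWithin 1 h (Set.Ici 0))
    (fun x hx => by simpa using hu 0 x hx)
    (fun x hx => (hu 1 x hx).congr_deriv (by have := hODE x hx; rw [show 1 + 1 = 2 from rfl]; linarith))
    (by obtain ⟨x, hx, h'⟩ := hne; exact ⟨x, hx, h'⟩)
  have hmain : ∀ n : ℕ, (∀ x, 0 ≤ x → 0 < (-1 : ℝ) ^ n * iteratedDerivWithin n h (Set.Ici 0) x) ∧
      Tendsto (iteratedDerivWithin n h (Set.Ici 0)) atTop (nhds 0) := by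
    intro n
    induction n using Nat.strong_induction_on with
    | _ n ih =>
    cases n with
    | zero => simpa using hbase
    | succ n =>
      have ih' : ∀ k, k ≤ n → _ := fun k hk => ih k (Nat.lt_succ_of_le hk)
      have hstep := aux_step (F := fun x => (-1 : ℝ) ^ n * iteratedDerivWithin n h (Set.Ici 0) x)
        (G := fun x => (-1 : ℝ) ^ n * iteratedDerivWithin (n + 1) h (Set.Ici 0) x)
        (Q := fun x => (-1 : ℝ) ^ n * iteratedDerivWithin n (h * h) (Set.Ici 0) x)
        (fun x hx => (hu n x hx).const_mul _)
        (fun x hx => ((hu (n + 1) x hx).const_mul _).congr_deriv (by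
          rw [hrec n x hx]; ring))
        (fun x hx => by
          rw [hleib n x hx, Finset.mul_sum]
          refine Finset.sum_pos (fun i hi => ?_) ⟨0, by simp⟩
          have hi' : i ≤ n := Nat.lt_succ_iff.1 (Finset.mem_range.1 hi)
          have a1 := (ih' i hi').1 x hx
          have a2 := (ih' (n - i) (Nat.sub_le _ _)).1 x hx
          have a3 : (0:ℝ) < n.choose i := by exact_mod_cast Nat.choose_pos hi'
          have a4 : (-1 : ℝ) ^ n = (-1) ^ i * (-1) ^ (n - i) := by
            rw [← pow_add, Nat.add_sub_cancel' hi']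
          have := mul_pos a3 (mul_pos a1 a2)
          rw [a4]
          linarith)
        (by
          have : Tendsto (fun x => (-1 : ℝ) ^ n * ∑ i ∈ Finset.range (n + 1),
              n.choose i * iteratedDerivWithin i h (Set.Ici 0) x
              * iteratedDerivWithin (n - i) h (Set.Ici 0) x) atTop
              (nhds ((-1 : ℝ) ^ n * ∑ i ∈ Finset.range (n + 1), (n.choose i : ℝ) * 0 * 0)) := by
            refine Tendsto.const_mul _ (tendsto_finsetSum _ (fun i hi => ?_))
            have hi' : i ≤ n := Nat.lt_succ_iff.1 (Finset.mem_range.1 hi)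
            exact ((ih' i hi').2.const_mul _).mul (ih' (n - i) (Nat.sub_le _ _)).2
          simp only [mul_zero, Finset.sum_const_zero] at this
          refine this.congr' ?_
          filter_upwards [eventually_ge_atTop 0] with x hx
          rw [hleib n x hx])
        (by simpa using (ih' n le_rfl).2.const_mul ((-1 : ℝ) ^ n))
      refine ⟨fun x hx => ?_, ?_⟩
      · have := hstep.1 x hx
        rw [pow_succ]
        linarith
      · have := hstep.2.const_mul ((-1 : ℝ) ^ n)
        simpa [← mul_assoc, ← mul_pow] using this
  exact ⟨hbase.1, hbase.2, fun n _ x hx => (hmain n).1 x hx, fun n _ => (hmain n).2⟩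
end
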